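/- arXiv:math/0212290 — 5 statements merged into one kernel-verified Lean document; each statement's English description precedes it below -/
import Mathlib

section
/- Let (y_1, y_2, y_3) ∈ (E^×)^3 satisfy: y_1y_2y_3 is a unit of O_E and q(y_iy_j)^{±1} ∈ O_E, q y_i^{±1} ∈ O_E for all 1 ≤ i ≠ j ≤ 3. Then for every permutation σ of {1,2,3} the triple (y_{σ(1)}, y_{σ(2)}, y_{σ(3)}) satisfies the same conditions; moreover, if χ and χ' are E-algebra homomorphisms A_E → E with χ(Y_i) = y_i and χ'(Y_i) = y_{σ(i)}, then the standard modules I_A(χ) and I_A(χ') both admit O_E-integral structures and the reductions of these integral structures to H_{F̄_p}-modules have isomorphic semisimplifications. -/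
/-- The defining relations of the affine Hecke algebra of type `A_2` (for `Gl_3`),
on the free algebra on four generators `T = X 0`, `T⁻¹ = X 1`, `S_1 = X 2`, `S_2 = X 3`. -/
inductive HeckeRel (R : Type) [CommRing R] (q : R) :
    FreeAlgebra R (Fin 4) → FreeAlgebra R (Fin 4) → Prop
  | TTinv : HeckeRel R q (FreeAlgebra.ι R 0 * FreeAlgebra.ι R 1) 1
  | TinvT : HeckeRel R q (FreeAlgebra.ι R 1 * FreeAlgebra.ι R 0) 1
  | quad : HeckeRel R q
      ((FreeAlgebra.ι R 2 + 1) * (FreeAlgebra.ι R 2 - algebraMap R (FreeAlgebra R (Fin 4)) q)) 0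
  | T3S1 : HeckeRel R q (FreeAlgebra.ι R 0 ^ 3 * FreeAlgebra.ι R 2)
      (FreeAlgebra.ι R 2 * FreeAlgebra.ι R 0 ^ 3)
  | braid : HeckeRel R q (FreeAlgebra.ι R 2 * FreeAlgebra.ι R 3 * FreeAlgebra.ι R 2)
      (FreeAlgebra.ι R 3 * FreeAlgebra.ι R 2 * FreeAlgebra.ι R 3)
  | TS2 : HeckeRel R q (FreeAlgebra.ι R 0 * FreeAlgebra.ι R 3)
      (FreeAlgebra.ι R 2 * FreeAlgebra.ι R 0)

/-- The affine Hecke algebra `H_R` with parameter `q ∈ R`. -/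
abbrev HeckeAlg (R : Type) [CommRing R] (q : R) := RingQuot (HeckeRel R q)

namespace HeckeAlg

variable (R : Type) [CommRing R] (q : R)

noncomputable def gen (i : Fin 4) : HeckeAlg R q :=
  RingQuot.mkAlgHom R (HeckeRel R q) (FreeAlgebra.ι R i)

noncomputable def T : HeckeAlg R q := gen R q 0
noncomputable def Tinv : HeckeAlg R q := gen R q 1
noncomputable def S1 : HeckeAlg R q := gen R q 2
noncomputable def S2 : HeckeAlg R q := gen R q 3

theorem T_mul_Tinv : T R q * Tinv R q = 1 := by
  simpa [T, Tinv, gen, map_mul, map_one] using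
    RingQuot.mkAlgHom_rel R (HeckeRel.TTinv (R := R) (q := q))

theorem Tinv_mul_T : Tinv R q * T R q = 1 := by
  simpa [T, Tinv, gen, map_mul, map_one] using
    RingQuot.mkAlgHom_rel R (HeckeRel.TinvT (R := R) (q := q))

theorem quad_rel : (S1 R q + 1) * (S1 R q - algebraMap R (HeckeAlg R q) q) = 0 := by
  simpa [S1, gen, map_mul, map_add, map_sub, map_one, map_zero, AlgHom.commutes] using
    RingQuot.mkAlgHom_rel R (HeckeRel.quad (R := R) (q := q))

theorem T3_mul_S1 : T R q ^ 3 * S1 R q = S1 R q * T R q ^ 3 := by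
  simpa [T, S1, gen, map_mul, map_pow] using
    RingQuot.mkAlgHom_rel R (HeckeRel.T3S1 (R := R) (q := q))

theorem braid_rel : S1 R q * S2 R q * S1 R q = S2 R q * S1 R q * S2 R q := by
  simpa [S1, S2, gen, map_mul] using
    RingQuot.mkAlgHom_rel R (HeckeRel.braid (R := R) (q := q))

theorem T_mul_S2 : T R q * S2 R q = S1 R q * T R q := by
  simpa [T, S1, S2, gen, map_mul] using
    RingQuot.mkAlgHom_rel R (HeckeRel.TS2 (R := R) (q := q))

/-- The canonical (base change) ring homomorphism `H_R → H_S` induced by a ring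
homomorphism `R → S` sending the parameter `q` to the parameter `q'`. -/
noncomputable def map {R S : Type} [CommRing R] [CommRing S] (f : R →+* S) (q : R) (q' : S)
    (h : f q = q') : HeckeAlg R q →+* HeckeAlg S q' := by
  subst h
  letI : Algebra R (HeckeAlg S (f q)) :=
    RingHom.toAlgebra' ((algebraMap S (HeckeAlg S (f q))).comp f)
      (fun c x => by simpa using Algebra.commutes (f c) x)
  refine RingQuot.lift
    ⟨((FreeAlgebra.lift R fun i => gen S (f q) i : _ →ₐ[R] HeckeAlg S (f q)) :
        FreeAlgebra R (Fin 4) →+* HeckeAlg S (f q)), ?_⟩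
  have key : ∀ i : Fin 4,
      (FreeAlgebra.lift R fun j => gen S (f q) j) (FreeAlgebra.ι R i) = gen S (f q) i :=
    fun i => FreeAlgebra.lift_ι_apply _ _
  have keyq : (FreeAlgebra.lift R fun j => gen S (f q) j)
      (algebraMap R (FreeAlgebra R (Fin 4)) q) = algebraMap S (HeckeAlg S (f q)) (f q) := by
    rw [AlgHom.commutes]
    rfl
  intro a b hab
  cases hab with
  | TTinv => simpa [key, T, Tinv] using T_mul_Tinv S (f q)
  | TinvT => simpa [key, T, Tinv] using Tinv_mul_T S (f q)
  | quad => simpa [key, keyq, S1] using quad_rel S (f q)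
  | T3S1 => simpa [key, T, S1] using T3_mul_S1 S (f q)
  | braid => simpa [key, S1, S2] using braid_rel S (f q)
  | TS2 => simpa [key, T, S1, S2] using T_mul_S2 S (f q)

/-- `S_1⁻¹ = q⁻¹ (S_1 - q + 1)`, where `qi` is an inverse of `q` in `R`. -/
noncomputable def S1i (qi : R) : HeckeAlg R q :=
  algebraMap R (HeckeAlg R q) qi * (S1 R q - algebraMap R (HeckeAlg R q) q + 1)

/-- `S_2⁻¹ = q⁻¹ (S_2 - q + 1)`, where `qi` is an inverse of `q` in `R`. -/
noncomputable def S2i (qi : R) : HeckeAlg R q :=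
  algebraMap R (HeckeAlg R q) qi * (S2 R q - algebraMap R (HeckeAlg R q) q + 1)

/-- The Bernstein elements `Y_1 = q S_1⁻¹ S_2⁻¹ T`, `Y_2 = S_2⁻¹ T S_1`,
`Y_3 = q⁻¹ T S_1 S_2`, where `qi` is an inverse of `q` in `R`. -/
noncomputable def Y (qi : R) : Fin 3 → HeckeAlg R q :=
  ![algebraMap R (HeckeAlg R q) q * S1i R q qi * S2i R q qi * T R q,
    S2i R q qi * T R q * S1 R q,
    algebraMap R (HeckeAlg R q) qi * T R q * S1 R q * S2 R q]

end HeckeAlg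

noncomputable section

/-- `H`, the affine Hecke algebra over `ℤ[q]` (with `q` an indeterminate). -/
abbrev HPoly : Type := HeckeAlg (Polynomial ℤ) Polynomial.X

variable (p : ℕ) [Fact p.Prime] (E : Type) [Field E] [Algebra ℚ_[p] E]
  [FiniteDimensional ℚ_[p] E] [Algebra ℤ_[p] E] [IsScalarTower ℤ_[p] ℚ_[p] E] (f : ℕ)

/-- The ring of integers `O_E` of the finite extension `E` of `ℚ_p`:
the integral closure of `ℤ_p` in `E`. -/
abbrev OE : Subalgebra ℤ_[p] E := integralClosure ℤ_[p] E

/-- `q_E = p^f ∈ O_E ⊆ E`, the image of the parameter `q`. -/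
def qE : E := (p : E) ^ f

/-- `H_E = H ⊗_{ℤ[q]} E`, realized as the Hecke algebra over `E` with parameter `q_E`. -/
abbrev HE : Type := HeckeAlg E (qE p E f)

/-- The canonical map `H → H_E` (image of `H` in `H_E`). -/
def ιE : HPoly →+* HE p E f :=
  HeckeAlg.map (Polynomial.eval₂RingHom (Int.castRingHom E) (qE p E f)) Polynomial.X
    (qE p E f) (Polynomial.eval₂_X _ _)

/-- The Bernstein elements `Y_1, Y_2, Y_3` of `H_E`. -/
def YE : Fin 3 → HE p E f := HeckeAlg.Y E (qE p E f) (qE p E f)⁻¹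

variable (u : Fin 3 → HE p E f)

/-- `A_E`, the commutative `E`-subalgebra of `H_E` generated by `Y_1^{±1}, Y_2^{±1}, Y_3^{±1}`;
here `u i` denotes the inverse of `Y_i`. -/
abbrev AE : Subalgebra E (HE p E f) :=
  Algebra.adjoin E (Set.range (YE p E f) ∪ Set.range u)

variable (χ : AE p E f u →ₐ[E] E)

/-- The value `y_i = χ(Y_i)` of an `E`-character `χ` of `A_E`. -/
def yval (i : Fin 3) : E :=
  χ ⟨YE p E f i, Algebra.subset_adjoin (Set.mem_union_left _ ⟨i, rfl⟩)⟩

/-- The left ideal of `H_E` generated by the elements `a - χ(a)`, `a ∈ A_E`. -/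
def Jχ : Submodule (HE p E f) (HE p E f) :=
  Submodule.span (HE p E f)
    {x : HE p E f | ∃ a : AE p E f u, x = (a : HE p E f) - algebraMap E (HE p E f) (χ a)}

/-- The standard module `I_A(χ) = H_E ⊗_{A_E, χ} E`, realized as the quotient of `H_E`
by the left ideal generated by the `a - χ(a)`, `a ∈ A_E`. -/
def StdMod : Type := HE p E f ⧸ Jχ p E f u χ

instance : AddCommGroup (StdMod p E f u χ) := by unfold StdMod; infer_instance
instance : Module (HE p E f) (StdMod p E f u χ) := by unfold StdMod; infer_instance
instance : Module E (StdMod p E f u χ) := by unfold StdMod; infer_instance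

/-- `L` is an `O_E`-integral structure of the standard module `I_A(χ)`:
an `O_E`-submodule which is free (it has an `O_E`-basis), stable under the image of `H`
in `H_E`, and contains an `E`-basis of `I_A(χ)`. -/
def IsIntegralStructure (L : Set (StdMod p E f u χ)) : Prop :=
  (0 ∈ L) ∧ (∀ x ∈ L, ∀ y ∈ L, x + y ∈ L) ∧
    (∀ (c : OE p E) (x : StdMod p E f u χ), x ∈ L → (c : E) • x ∈ L) ∧
    (∀ (h : HPoly) (x : StdMod p E f u χ), x ∈ L → ιE p E f h • x ∈ L) ∧
    (∃ (n : ℕ) (b : Fin n → StdMod p E f u χ), (∀ i, b i ∈ L) ∧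
      ∀ x ∈ L, ∃! c : Fin n → OE p E, x = ∑ i, ((c i : E) • b i)) ∧
    (∃ (m : ℕ) (bE : Module.Basis (Fin m) E (StdMod p E f u χ)), ∀ i, bE i ∈ L)

end

noncomputable section

/-- `F̄_p`, an algebraic closure of `F_p`. -/
abbrev Fbar (p : ℕ) [Fact p.Prime] : Type := AlgebraicClosure (ZMod p)

/-- `H_{F̄_p} = H ⊗_{ℤ[q]} F̄_p` with `q ↦ 0`. -/
abbrev HF (p : ℕ) [Fact p.Prime] : Type := HeckeAlg (Fbar p) 0

/-- The canonical map `H → H_{F̄_p}` (sending `q` to `0`). -/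
def ιF (p : ℕ) [Fact p.Prime] : HPoly →+* HF p :=
  HeckeAlg.map (Polynomial.eval₂RingHom (Int.castRingHom (Fbar p)) 0) Polynomial.X 0
    (Polynomial.eval₂_X _ _)

variable (p : ℕ) [Fact p.Prime] (E : Type) [Field E] [Algebra ℚ_[p] E]
  [FiniteDimensional ℚ_[p] E] [Algebra ℤ_[p] E] [IsScalarTower ℤ_[p] ℚ_[p] E] (f : ℕ)
  (u : Fin 3 → HE p E f) (χ : AE p E f u →ₐ[E] E)

/-- `(V, π)` realizes the reduction `L ⊗_{O_E, r} F̄_p` of the integral structure `L`: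
`π` is additive and `r`-semilinear on `L`, and some `O_E`-basis of `L` is sent by `π`
to an `F̄_p`-basis of `V`. -/
def IsReduction (r : OE p E →+* Fbar p) (L : Set (StdMod p E f u χ)) (V : Type)
    [AddCommGroup V] [Module (Fbar p) V] (π : StdMod p E f u χ → V) : Prop :=
  (∀ x ∈ L, ∀ y ∈ L, π (x + y) = π x + π y) ∧
  (∀ (c : OE p E), ∀ x ∈ L, π ((c : E) • x) = r c • π x) ∧
  (∃ (n : ℕ) (b : Fin n → StdMod p E f u χ),
    (∀ i, b i ∈ L) ∧
    (∀ x ∈ L, ∃! c : Fin n → OE p E, x = ∑ i, ((c i : E) • b i)) ∧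
    (∃ bV : Module.Basis (Fin n) (Fbar p) V, ∀ i, bV i = π (b i)))

/-- Two `H_{F̄_p}`-modules (given by representations `ρ, ρ'` on `F̄_p`-vector spaces
`V, V'`) have isomorphic semisimplifications: they admit Jordan–Hölder (composition)
series of the same length whose simple factors are isomorphic (as `H_{F̄_p}`-modules)
after a permutation, i.e. they have the same Jordan–Hölder factors counted with
multiplicity. -/
def SameJHFactors {V V' : Type} [AddCommGroup V] [Module (Fbar p) V]
    [AddCommGroup V'] [Module (Fbar p) V']
    (ρ : HF p →ₐ[Fbar p] Module.End (Fbar p) V)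
    (ρ' : HF p →ₐ[Fbar p] Module.End (Fbar p) V') : Prop :=
  ∃ (n : ℕ) (W : Fin (n + 1) → Submodule (Fbar p) V)
    (W' : Fin (n + 1) → Submodule (Fbar p) V') (σ : Equiv.Perm (Fin n))
    (hW : ∀ (j : Fin (n + 1)) (a : HF p), ∀ x ∈ W j, ρ a x ∈ W j)
    (hW' : ∀ (j : Fin (n + 1)) (a : HF p), ∀ x ∈ W' j, ρ' a x ∈ W' j),
    Monotone W ∧ W 0 = ⊥ ∧ W (Fin.last n) = ⊤ ∧
    Monotone W' ∧ W' 0 = ⊥ ∧ W' (Fin.last n) = ⊤ ∧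
    (∀ i : Fin n, W i.castSucc < W i.succ ∧
      ∀ U : Submodule (Fbar p) V, (∀ a : HF p, ∀ x ∈ U, ρ a x ∈ U) →
        W i.castSucc ≤ U → U ≤ W i.succ → U = W i.castSucc ∨ U = W i.succ) ∧
    (∀ i : Fin n, W' i.castSucc < W' i.succ ∧
      ∀ U : Submodule (Fbar p) V', (∀ a : HF p, ∀ x ∈ U, ρ' a x ∈ U) →
        W' i.castSucc ≤ U → U ≤ W' i.succ → U = W' i.castSucc ∨ U = W' i.succ) ∧
    ∀ i : Fin n,
      ∃ g : (W i.succ ⧸ (W i.castSucc).comap (W i.succ).subtype) ≃ₗ[Fbar p]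
          (W' (σ i).succ ⧸ (W' (σ i).castSucc).comap (W' (σ i).succ).subtype),
        ∀ (a : HF p) (x : W i.succ), ∃ y : W' (σ i).succ,
          g (Submodule.Quotient.mk x) = Submodule.Quotient.mk y ∧
          g (Submodule.Quotient.mk (⟨ρ a x.1, hW i.succ a x.1 x.2⟩ : W i.succ)) =
            Submodule.Quotient.mk (⟨ρ' a y.1, hW' (σ i).succ a y.1 y.2⟩ : W' (σ i).succ)

end

noncomputable section

variable (p : ℕ) [Fact p.Prime] (E : Type) [Field E] [Algebra ℚ_[p] E]
  [FiniteDimensional ℚ_[p] E] [Algebra ℤ_[p] E] [IsScalarTower ℤ_[p] ℚ_[p] E] (f : ℕ)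

/-- The integrality conditions on a triple `(y_1, y_2, y_3) ∈ (E^×)^3`:
`y_1y_2y_3` is a unit of `O_E`, and `q(y_iy_j)^{±1} ∈ O_E`, `q y_i^{±1} ∈ O_E`
for all `1 ≤ i ≠ j ≤ 3`. -/
def IntCond (y : Fin 3 → Eˣ) : Prop :=
  ((y 0 * y 1 * y 2 : Eˣ) : E) ∈ OE p E ∧ (((y 0 * y 1 * y 2)⁻¹ : Eˣ) : E) ∈ OE p E ∧
  ∀ i j : Fin 3, i ≠ j →
    qE p E f * ((y i * y j : Eˣ) : E) ∈ OE p E ∧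
    qE p E f * (((y i * y j)⁻¹ : Eˣ) : E) ∈ OE p E ∧
    qE p E f * (y i : E) ∈ OE p E ∧
    qE p E f * (((y i)⁻¹ : Eˣ) : E) ∈ OE p E

end

section

theorem bn_dens {k A : Type} [Field k] [Ring A] [Algebra k A] {ι : Type} [Fintype ι]
    [DecidableEq ι] (F : ι → ModuleCat.{0} A) (hF : ∀ i, IsSimpleModule A (F i)) (c : ι → k)
    (hc : ∀ i j, Nonempty (F i ≃ₗ[A] F j) → c i = c j) (t : Finset (∀ i, F i)) :
    ∃ a : A, ∀ x ∈ t, ∀ i, a • x i = algebraMap k A (c i) • x i := by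
  have comm : ∀ (f : (∀ i, F i) →ₗ[A] (∀ i, F i)) (x : ∀ i, F i) (i : ι),
      algebraMap k A (c i) • (f x) i = f (fun j => algebraMap k A (c j) • x j) i := by
    intro f x i
    have hx : ∀ y : (∀ i, F i), f y i = ∑ j, f (Pi.single j (y j)) i := by
      intro y
      conv_lhs => rw [← Finset.univ_sum_single y]
      rw [map_sum, Finset.sum_apply]
    rw [hx x, hx, Finset.smul_sum]
    refine Finset.sum_congr rfl fun j _ => ?_
    let g : F j →ₗ[A] F i := (LinearMap.proj i).comp (f.comp (LinearMap.single A _ j))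
    have hg : ∀ z, g z = f (Pi.single j z) i := fun z => rfl
    rw [← hg, ← hg]
    rcases LinearMap.bijective_or_eq_zero g with h | h
    · rw [hc j i ⟨LinearEquiv.ofBijective g h⟩]
      let u : A := algebraMap k A (c i)
      exact (g.map_smul u (x j)).symm
    · simp [h]
  let e : Module.End (Module.End A (∀ i, F i)) (∀ i, F i) :=
    { toFun := fun x i => algebraMap k A (c i) • x i
      map_add' := fun x y => by ext i; simp
      map_smul' := fun f x => by
        ext i
        exact comm f x i }
  obtain ⟨r, hr⟩ := jacobson_density e t
  exact ⟨r, fun x hx i => (congrFun (hr x hx) i).symm⟩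

theorem bn_det_step {k V : Type} [Field k] [AddCommGroup V] [Module k V] [FiniteDimensional k V]
    (f : V →ₗ[k] V) (N N' : Submodule k V) (hle : N ≤ N') (hN : ∀ x ∈ N, f x ∈ N)
    (hN' : ∀ x ∈ N', f x ∈ N') (c : k) (hc : ∀ x ∈ N', f x - c • x ∈ N) :
    (f.restrict hN').det =
      (f.restrict hN).det * c ^ Module.finrank k (N' ⧸ N.submoduleOf N') := by
  have he : N.submoduleOf N' ≤ (N.submoduleOf N').comap (f.restrict hN') := by
    intro x hx
    exact hN _ hx
  rw [LinearMap.det_eq_det_mul_det (N.submoduleOf N') (f.restrict hN') he]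
  congr 1
  · rw [← LinearMap.det_conj _ (Submodule.submoduleOfEquivOfLe hle)]
    congr 1
  · have : (N.submoduleOf N').mapQ (N.submoduleOf N') (f.restrict hN') he
        = c • LinearMap.id := by
      apply Submodule.linearMap_qext
      ext x
      simp only [LinearMap.comp_apply, Submodule.mkQ_apply, Submodule.mapQ_apply,
        LinearMap.smul_apply, LinearMap.id_apply]
      rw [← Submodule.Quotient.mk_smul, Submodule.Quotient.eq]
      exact hc x x.2
    rw [this, LinearMap.det_smul, LinearMap.det_id, mul_one]

theorem bn_det_chain {k V : Type} [Field k] [AddCommGroup V] [Module k V] [FiniteDimensional k V]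
    (f : V →ₗ[k] V) (n : ℕ) (N : Fin (n + 1) → Submodule k V) (hmono : Monotone N)
    (h0 : N 0 = ⊥) (h1 : N (Fin.last n) = ⊤) (hN : ∀ j, ∀ x ∈ N j, f x ∈ N j) (c : Fin n → k)
    (hc : ∀ i : Fin n, ∀ x ∈ N i.succ, f x - c i • x ∈ N i.castSucc) :
    f.det = ∏ i : Fin n, c i ^
      Module.finrank k (N i.succ ⧸ (N i.castSucc).submoduleOf (N i.succ)) := by
  have key : ∀ m : ℕ, ∀ hm : m ≤ n, (f.restrict (hN ⟨m, by omega⟩)).det =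
      ∏ i : Fin m, c (i.castLE hm) ^ Module.finrank k (N (i.castLE hm).succ ⧸
        (N (i.castLE hm).castSucc).submoduleOf (N (i.castLE hm).succ)) := by
    intro m
    induction m with
    | zero =>
      intro hm
      have : Subsingleton (N ⟨0, by omega⟩) := by
        have : N ⟨0, by omega⟩ = ⊥ := h0
        rw [this]; infer_instance
      rw [Fin.prod_univ_zero]
      exact LinearMap.det_eq_one_of_subsingleton _
    | succ m ih =>
      intro hm
      rw [Fin.prod_univ_castSucc]
      rw [bn_det_step f (N ⟨m, by omega⟩) (N ⟨m + 1, by omega⟩) (hmono (by simp))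
        (hN _) (hN _) (c ⟨m, by omega⟩) (hc ⟨m, by omega⟩), ih (by omega)]
      rfl
  have := key n le_rfl
  rw [← LinearMap.det_conj f (LinearEquiv.ofTop (N (Fin.last n)) h1).symm]
  refine Eq.trans ?_ this
  congr 1

theorem bn_dens' {k A : Type} [Field k] [Ring A] [Algebra k A] {ι : Type} [Fintype ι]
    [DecidableEq ι] (F : ι → ModuleCat.{0} A) (hF : ∀ i, IsSimpleModule A (F i)) (c : ι → k)
    (hc : ∀ i j, Nonempty (F i ≃ₗ[A] F j) → c i = c j)
    (hfin : ∀ i, ∃ B : Finset (F i), ∀ x : F i, ∃ g : F i → k,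
      x = ∑ b ∈ B, algebraMap k A (g b) • b) :
    ∃ a : A, ∀ i, ∀ x : F i, a • x = algebraMap k A (c i) • x := by
  classical
  choose B hB using hfin
  obtain ⟨a, ha⟩ := bn_dens F hF c hc
    (Finset.univ.biUnion fun i => (B i).image fun b => (Pi.single i b : ∀ i, F i))
  have ha' : ∀ i, ∀ b ∈ B i, a • b = algebraMap k A (c i) • b := by
    intro i b hb
    have := ha (Pi.single i b) (by
      simp only [Finset.mem_biUnion, Finset.mem_univ, true_and, Finset.mem_image]
      exact ⟨i, b, hb, rfl⟩) i
    simpa using this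
  refine ⟨a, fun i x => ?_⟩
  obtain ⟨g, hg⟩ := hB i x
  rw [hg, Finset.smul_sum, Finset.smul_sum]
  refine Finset.sum_congr rfl fun b hb => ?_
  rw [← mul_smul, ← Algebra.commutes, mul_smul, ha' i b hb, ← mul_smul, ← mul_smul,
    Algebra.commutes]

theorem bn_fin {k A M : Type} [Field k] [Ring A] [Algebra k A] [AddCommGroup M] [Module k M]
    [Module A M] [IsScalarTower k A M] [Module.Finite k M] :
    ∃ B : Finset M, ∀ x : M, ∃ g : M → k, x = ∑ b ∈ B, algebraMap k A (g b) • b := by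
  obtain ⟨B, hB⟩ := Module.Finite.fg_top (R := k) (M := M)
  refine ⟨B, fun x => ?_⟩
  have hx : x ∈ Submodule.span k (B : Set M) := by rw [hB]; trivial
  obtain ⟨g, -, hg⟩ := Submodule.mem_span_finset.mp hx
  exact ⟨g, by simpa using hg.symm⟩

theorem bn_series_det {k A V : Type} [Field k] [Ring A] [Algebra k A]
    [AddCommGroup V] [Module k V] [FiniteDimensional k V] [Module A V] [IsScalarTower k A V]
    (n : ℕ) (N : Fin (n + 1) → Submodule A V) (hmono : Monotone N)
    (h0 : N 0 = ⊥) (h1 : N (Fin.last n) = ⊤) (a : A) (c : Fin n → k)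
    (hc : ∀ (i : Fin n) (x : N i.succ ⧸ (N i.castSucc).submoduleOf (N i.succ)),
      a • x = algebraMap k A (c i) • x) :
    (Algebra.lsmul k k V a).det = ∏ i : Fin n, c i ^
      Module.finrank k (N i.succ ⧸ (N i.castSucc).submoduleOf (N i.succ)) := by
  refine bn_det_chain (Algebra.lsmul k k V a) n (fun i => (N i).restrictScalars k)
    (fun i j hij x hx => hmono hij hx) (by simp [h0]) (by simp [h1])
    (fun j x hx => (N j).smul_mem a hx) c ?_
  intro i x hx
  have := hc i (Submodule.Quotient.mk ⟨x, hx⟩)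
  rw [← Submodule.Quotient.mk_smul, ← Submodule.Quotient.mk_smul, Submodule.Quotient.eq] at this
  have h2 : a • x - algebraMap k A (c i) • x ∈ N i.castSucc := this
  rwa [algebraMap_smul] at h2

theorem bn_finq {k A V : Type} [Field k] [Ring A] [Algebra k A]
    [AddCommGroup V] [Module k V] [FiniteDimensional k V] [Module A V] [IsScalarTower k A V]
    (N N' : Submodule A V) : Module.Finite k (N' ⧸ N.submoduleOf N') := by
  have : Module.Finite k N' := inferInstanceAs (Module.Finite k (N'.restrictScalars k))
  let g : N' →ₗ[k] (N' ⧸ N.submoduleOf N') := (N.submoduleOf N').mkQ.restrictScalars k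
  have hg : Function.Surjective g := fun x => by
    obtain ⟨y, rfl⟩ := Submodule.Quotient.mk_surjective _ x
    exact ⟨y, rfl⟩
  exact Module.Finite.of_surjective g hg

set_option maxHeartbeats 2000000 in
theorem bn_main {k A V V' : Type} [Field k] [Infinite k] [Ring A] [Algebra k A]
    [AddCommGroup V] [Module k V] [FiniteDimensional k V] [Module A V] [IsScalarTower k A V]
    [AddCommGroup V'] [Module k V'] [FiniteDimensional k V'] [Module A V'] [IsScalarTower k A V']
    (hdet : ∀ a : A, (Algebra.lsmul k k V a).det = (Algebra.lsmul k k V' a).det) :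
    ∃ (n : ℕ) (N : Fin (n + 1) → Submodule A V) (N' : Fin (n + 1) → Submodule A V')
      (σ : Equiv.Perm (Fin n)), Monotone N ∧ N 0 = ⊥ ∧ N (Fin.last n) = ⊤ ∧
      Monotone N' ∧ N' 0 = ⊥ ∧ N' (Fin.last n) = ⊤ ∧
      (∀ i : Fin n, N i.castSucc ⋖ N i.succ) ∧ (∀ i : Fin n, N' i.castSucc ⋖ N' i.succ) ∧
      ∀ i : Fin n, Nonempty ((N i.succ ⧸ (N i.castSucc).submoduleOf (N i.succ)) ≃ₗ[A]
        (N' (σ i).succ ⧸ (N' (σ i).castSucc).submoduleOf (N' (σ i).succ))) := by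
  classical
  have : IsNoetherian A V := isNoetherian_of_tower k inferInstance
  have : IsNoetherian A V' := isNoetherian_of_tower k inferInstance
  have : IsArtinian A V := isArtinian_of_tower k inferInstance
  have : IsArtinian A V' := isArtinian_of_tower k inferInstance
  obtain ⟨s, s0, s1⟩ := isFiniteLength_iff_exists_compositionSeries.mp
    (isFiniteLength_iff_isNoetherian_isArtinian.mpr ⟨inferInstance, inferInstance⟩ :
      IsFiniteLength A V)
  obtain ⟨s', s0', s1'⟩ := isFiniteLength_iff_exists_compositionSeries.mp
    (isFiniteLength_iff_isNoetherian_isArtinian.mpr ⟨inferInstance, inferInstance⟩ :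
      IsFiniteLength A V')
  have cov : ∀ i : Fin s.length, s i.castSucc ⋖ s i.succ := fun i => s.step i
  have cov' : ∀ i : Fin s'.length, s' i.castSucc ⋖ s' i.succ := fun i => s'.step i
  let Q : Fin s.length → ModuleCat.{0} A := fun i =>
    ModuleCat.of A (s i.succ ⧸ (s i.castSucc).submoduleOf (s i.succ))
  let Q' : Fin s'.length → ModuleCat.{0} A := fun i =>
    ModuleCat.of A (s' i.succ ⧸ (s' i.castSucc).submoduleOf (s' i.succ))
  let F : Fin s.length ⊕ Fin s'.length → ModuleCat.{0} A := Sum.elim Q Q'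
  have hF : ∀ i, IsSimpleModule A (F i) := by
    rintro (i | i)
    · exact (covBy_iff_quot_is_simple (cov i).le).mp (cov i)
    · exact (covBy_iff_quot_is_simple (cov' i).le).mp (cov' i)
  let st : Setoid (Fin s.length ⊕ Fin s'.length) :=
    { r := fun i j => Nonempty (F i ≃ₗ[A] F j)
      iseqv := ⟨fun i => ⟨LinearEquiv.refl A _⟩, fun ⟨e⟩ => ⟨e.symm⟩,
        fun ⟨e⟩ ⟨e'⟩ => ⟨e.trans e'⟩⟩ }
  have fibers : ∀ z : Quotient st, Fintype.card {i : Fin s.length // Quotient.mk st (.inl i) = z} =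
      Fintype.card {i : Fin s'.length // Quotient.mk st (.inr i) = z} := by
    intro z
    obtain ⟨l, rfl⟩ := Quotient.exists_rep z
    let d : Fin s.length ⊕ Fin s'.length → ℕ := Sum.elim
      (fun i => Module.finrank k (s i.succ ⧸ (s i.castSucc).submoduleOf (s i.succ)))
      (fun i => Module.finrank k (s' i.succ ⧸ (s' i.castSucc).submoduleOf (s' i.succ)))
    have hd : ∀ i j, Nonempty (F i ≃ₗ[A] F j) → d i = d j := by
      rintro (i | i) (j | j) ⟨g⟩
      · let g' : (s i.succ ⧸ (s i.castSucc).submoduleOf (s i.succ)) ≃ₗ[A]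
          (s j.succ ⧸ (s j.castSucc).submoduleOf (s j.succ)) := g
        exact (g'.restrictScalars k).finrank_eq
      · let g' : (s i.succ ⧸ (s i.castSucc).submoduleOf (s i.succ)) ≃ₗ[A]
          (s' j.succ ⧸ (s' j.castSucc).submoduleOf (s' j.succ)) := g
        exact (g'.restrictScalars k).finrank_eq
      · let g' : (s' i.succ ⧸ (s' i.castSucc).submoduleOf (s' i.succ)) ≃ₗ[A]
          (s j.succ ⧸ (s j.castSucc).submoduleOf (s j.succ)) := g
        exact (g'.restrictScalars k).finrank_eq
      · let g' : (s' i.succ ⧸ (s' i.castSucc).submoduleOf (s' i.succ)) ≃ₗ[A]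
          (s' j.succ ⧸ (s' j.castSucc).submoduleOf (s' j.succ)) := g
        exact (g'.restrictScalars k).finrank_eq
    have fq := fun i : Fin s.length => bn_finq (k := k) (s i.castSucc) (s i.succ)
    have fq' := fun i : Fin s'.length => bn_finq (k := k) (s' i.castSucc) (s' i.succ)
    have hdpos : 0 < d l := by
      rcases l with i | i
      · have := (hF (.inl i)).nontrivial
        have : Nontrivial (s i.succ ⧸ (s i.castSucc).submoduleOf (s i.succ)) := this
        exact Module.finrank_pos
      · have := (hF (.inr i)).nontrivial
        have : Nontrivial (s' i.succ ⧸ (s' i.castSucc).submoduleOf (s' i.succ)) := this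
        exact Module.finrank_pos
    have prodeq : ∀ (t : k) {m : ℕ} (φ : Fin m → Fin s.length ⊕ Fin s'.length),
        ∏ i : Fin m, (if Quotient.mk st (φ i) = Quotient.mk st l then t else 1) ^ d (φ i) =
        t ^ (Fintype.card {i : Fin m // Quotient.mk st (φ i) = Quotient.mk st l} * d l) := by
      intro t m φ
      rw [Fintype.card_subtype, mul_comm, pow_mul, ← Finset.prod_const, Finset.prod_filter]
      refine Finset.prod_congr rfl fun i _ => ?_
      split_ifs with h
      · rw [hd _ _ (Quotient.exact h)]
      · simp
    have hpow : ∀ t : k,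
        t ^ (Fintype.card {i : Fin s.length // Quotient.mk st (.inl i) = Quotient.mk st l} * d l) =
        t ^ (Fintype.card {i : Fin s'.length // Quotient.mk st (.inr i) = Quotient.mk st l}
          * d l) := by
      intro t
      let c : Fin s.length ⊕ Fin s'.length → k := fun i =>
        if Quotient.mk st i = Quotient.mk st l then t else 1
      obtain ⟨a, ha⟩ := bn_dens' F hF c (fun i j hij => by
          have : Quotient.mk st i = Quotient.mk st j := Quotient.sound hij
          simp only [c, this]) (by
        rintro (i | i)
        · exact bn_fin (k := k) (A := A)
            (M := s i.succ ⧸ (s i.castSucc).submoduleOf (s i.succ))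
        · exact bn_fin (k := k) (A := A)
            (M := s' i.succ ⧸ (s' i.castSucc).submoduleOf (s' i.succ)))
      have e1 := bn_series_det s.length s s.strictMono.monotone s0 s1 a (fun i => c (.inl i))
        (fun i x => ha (.inl i) x)
      have e2 := bn_series_det s'.length s' s'.strictMono.monotone s0' s1' a (fun i => c (.inr i))
        (fun i x => ha (.inr i) x)
      rw [hdet a] at e1
      rw [← prodeq t Sum.inl, ← prodeq t Sum.inr]
      exact e1.symm.trans e2
    have := Polynomial.funext (p := (Polynomial.X : Polynomial k) ^ (Fintype.card
      {i : Fin s.length // Quotient.mk st (.inl i) = Quotient.mk st l} * d l))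
      (q := (Polynomial.X : Polynomial k) ^ (Fintype.card
      {i : Fin s'.length // Quotient.mk st (.inr i) = Quotient.mk st l} * d l))
      (fun t => by simpa using hpow t)
    have h3 := congrArg Polynomial.natDegree this
    rw [Polynomial.natDegree_X_pow, Polynomial.natDegree_X_pow] at h3
    exact Nat.eq_of_mul_eq_mul_right hdpos h3
  let e : Fin s.length ≃ Fin s'.length :=
    (Equiv.sigmaFiberEquiv (fun i : Fin s.length => Quotient.mk st (.inl i))).symm.trans
      ((Equiv.sigmaCongrRight fun z => Fintype.equivOfCardEq (fibers z)).trans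
        (Equiv.sigmaFiberEquiv (fun i : Fin s'.length => Quotient.mk st (.inr i))))
  have he : ∀ i, Nonempty (F (.inl i) ≃ₗ[A] F (.inr (e i))) := by
    intro i
    have h2 := ((Fintype.equivOfCardEq (fibers (Quotient.mk st (.inl i)))) ⟨i, rfl⟩).2
    exact Quotient.exact h2.symm
  have hlen : s.length = s'.length := by simpa using Fintype.card_congr e
  refine ⟨s.length, s, fun i => s' (i.cast (by rw [hlen])), e.trans (finCongr hlen.symm),
    s.strictMono.monotone, s0, s1, ?_, ?_, ?_, cov, ?_, ?_⟩
  · intro i j hij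
    exact s'.strictMono.monotone (by simpa using hij)
  · exact s0'
  · rw [← s1']; ext x; simp only [Fin.cast_last]; exact Iff.rfl
  · intro i
    exact cov' (i.cast hlen)
  · intro i
    exact he i

end

section

set_option maxHeartbeats 2000000 in
theorem same_jh (p : ℕ) [Fact p.Prime] {V V' : Type} [AddCommGroup V] [Module (Fbar p) V]
    [AddCommGroup V'] [Module (Fbar p) V']
    [FiniteDimensional (Fbar p) V] [FiniteDimensional (Fbar p) V']
    (ρ : HF p →ₐ[Fbar p] Module.End (Fbar p) V)
    (ρ' : HF p →ₐ[Fbar p] Module.End (Fbar p) V')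
    (hdet : ∀ a, (ρ a).det = (ρ' a).det) : SameJHFactors p ρ ρ' := by
  have : Infinite (Fbar p) := IsAlgClosed.instInfinite
  letI m1 : Module (HF p) V := Module.compHom V ρ.toRingHom
  letI m2 : Module (HF p) V' := Module.compHom V' ρ'.toRingHom
  have sm1 : ∀ (a : HF p) (x : V), a • x = ρ a x := fun a x => rfl
  have sm2 : ∀ (a : HF p) (x : V'), a • x = ρ' a x := fun a x => rfl
  haveI t1 : IsScalarTower (Fbar p) (HF p) V := ⟨fun c a x => by
    rw [sm1, sm1, map_smul]; rfl⟩
  haveI t2 : IsScalarTower (Fbar p) (HF p) V' := ⟨fun c a x => by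
    rw [sm2, sm2, map_smul]; rfl⟩
  obtain ⟨n, N, N', σ, hm, h0, h1, hm', h0', h1', hc, hc', hiso⟩ :=
    bn_main (k := Fbar p) (A := HF p) (V := V) (V' := V') (fun a => hdet a)
  refine ⟨n, fun i => (N i).restrictScalars _, fun i => (N' i).restrictScalars _, σ,
    fun j a x hx => (N j).smul_mem a hx, fun j a x hx => (N' j).smul_mem a hx,
    fun i j hij x hx => hm hij hx, by simp [h0], by simp [h1],
    fun i j hij x hx => hm' hij hx, by simp [h0'], by simp [h1'], ?_, ?_, ?_⟩
  · intro i
    refine ⟨(hc i).lt, fun U hU h1 h2 => ?_⟩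
    let U' : Submodule (HF p) V := { U with smul_mem' := fun a x hx => hU a x hx }
    rcases (hc i).eq_or_eq (c := U') h1 h2 with h | h
    · left; ext x; exact SetLike.ext_iff.mp h x
    · right; ext x; exact SetLike.ext_iff.mp h x
  · intro i
    refine ⟨(hc' i).lt, fun U hU h1 h2 => ?_⟩
    let U' : Submodule (HF p) V' := { U with smul_mem' := fun a x hx => hU a x hx }
    rcases (hc' i).eq_or_eq (c := U') h1 h2 with h | h
    · left; ext x; exact SetLike.ext_iff.mp h x
    · right; ext x; exact SetLike.ext_iff.mp h x
  · intro i
    obtain ⟨g⟩ := hiso i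
    refine ⟨g.restrictScalars (Fbar p), fun a x => ?_⟩
    obtain ⟨y, hy⟩ := Submodule.Quotient.mk_surjective _ (g (Submodule.Quotient.mk x))
    refine ⟨y, hy.symm, ?_⟩
    have := g.map_smul a (Submodule.Quotient.mk x)
    rw [← hy] at this
    exact this

end

section

/-- Matrix of `T` on the explicit model of the standard module. -/
def mT {R : Type} [CommRing R] (q qi : R) (y : Fin 3 → R) : Matrix (Fin 6) (Fin 6) R :=
  !![0, 0, 0, q * y 2, 0, 0;
     0, 0, 0, 0, 0, q * y 2;
     0, y 1, 0, 0, 0, 0;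
     0, 0, 0, 0, y 1, 0;
     qi * y 0, 0, 0, 0, 0, 0;
     0, 0, qi * y 0, 0, 0, 0]

/-- Matrix of `S_1`. -/
def mS1 {R : Type} [CommRing R] (q : R) : Matrix (Fin 6) (Fin 6) R :=
  !![0, q, 0, 0, 0, 0;
     1, q - 1, 0, 0, 0, 0;
     0, 0, 0, q, 0, 0;
     0, 0, 1, q - 1, 0, 0;
     0, 0, 0, 0, 0, q;
     0, 0, 0, 0, 1, q - 1]

/-- Matrix of `S_2`. -/
def mS2 {R : Type} [CommRing R] (q : R) : Matrix (Fin 6) (Fin 6) R :=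
  !![0, 0, q, 0, 0, 0;
     0, 0, 0, 0, q, 0;
     1, 0, q - 1, 0, 0, 0;
     0, 0, 0, 0, 0, q;
     0, 1, 0, 0, q - 1, 0;
     0, 0, 0, 1, 0, q - 1]

/-- Matrices of the four generators. -/
def mG {R : Type} [CommRing R] (q qi ci : R) (y : Fin 3 → R) :
    Fin 4 → Matrix (Fin 6) (Fin 6) R :=
  ![mT q qi y, ci • (mT q qi y * mT q qi y), mS1 q, mS2 q]

/-- Intertwiner for the transposition of the first two parameters. -/
def mP1 {R : Type} [CommRing R] (q : R) (y : Fin 3 → R) : Matrix (Fin 6) (Fin 6) R :=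
  ((q - 1) * y 0) • 1 + (y 1 - y 0) •
  !![0, q, 0, 0, 0, 0;
     1, q - 1, 0, 0, 0, 0;
     0, 0, 0, 0, q, 0;
     0, 0, 0, 0, 0, q;
     0, 0, 1, 0, q - 1, 0;
     0, 0, 0, 1, 0, q - 1]

/-- Intertwiner for the transposition of the last two parameters. -/
def mP2 {R : Type} [CommRing R] (q : R) (y : Fin 3 → R) : Matrix (Fin 6) (Fin 6) R :=
  ((q - 1) * y 1) • 1 + (y 2 - y 1) •
  !![0, 0, q, 0, 0, 0;
     0, 0, 0, q, 0, 0;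
     1, 0, q - 1, 0, 0, 0;
     0, 1, 0, q - 1, 0, 0;
     0, 0, 0, 0, 0, q;
     0, 0, 0, 0, 1, q - 1]

set_option maxHeartbeats 2000000

theorem mT_cube {R : Type} [CommRing R] (q qi : R) (hq : q * qi = 1) (y : Fin 3 → R) :
    mT q qi y * (mT q qi y * mT q qi y) = (y 0 * y 1 * y 2) • 1 := by
  ext i j
  fin_cases i <;> fin_cases j <;>
    simp [mT, Matrix.mul_apply, Fin.sum_univ_six] <;> linear_combination (y 0 * y 1 * y 2) * hq

theorem mS1_quad {R : Type} [CommRing R] (q : R) :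
    (mS1 q + 1) * (mS1 q - q • 1) = 0 := by
  ext i j
  fin_cases i <;> fin_cases j <;>
    simp [mS1, Matrix.mul_apply, Fin.sum_univ_six, Matrix.one_apply]

theorem m_braid {R : Type} [CommRing R] (q : R) :
    mS1 q * mS2 q * mS1 q = mS2 q * mS1 q * mS2 q := by
  ext i j
  fin_cases i <;> fin_cases j <;>
    simp [mS1, mS2, Matrix.mul_apply, Fin.sum_univ_six] <;> ring

theorem mT_S2 {R : Type} [CommRing R] (q qi : R) (hq : q * qi = 1) (y : Fin 3 → R) :
    mT q qi y * mS2 q = mS1 q * mT q qi y := by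
  ext i j
  fin_cases i <;> fin_cases j <;>
    simp [mS1, mS2, mT, Matrix.mul_apply, Fin.sum_univ_six] <;> grind

theorem mP1_T {R : Type} [CommRing R] (q qi : R) (hq : q * qi = 1) (y : Fin 3 → R) :
    mP1 q y * mT q qi y = mT q qi (y ∘ Equiv.swap 0 1) * mP1 q y := by
  ext i j
  fin_cases i <;> fin_cases j <;>
    simp [mP1, mT, Matrix.mul_apply, Fin.sum_univ_six, Matrix.one_apply, Equiv.swap_apply_def] <;>
    grind

theorem mP1_S1 {R : Type} [CommRing R] (q : R) (y : Fin 3 → R) :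
    mP1 q y * mS1 q = mS1 q * mP1 q y := by
  ext i j
  fin_cases i <;> fin_cases j <;>
    simp [mP1, mS1, Matrix.mul_apply, Fin.sum_univ_six, Matrix.one_apply] <;> ring

theorem mP1_S2 {R : Type} [CommRing R] (q : R) (y : Fin 3 → R) :
    mP1 q y * mS2 q = mS2 q * mP1 q y := by
  ext i j
  fin_cases i <;> fin_cases j <;>
    simp [mP1, mS2, Matrix.mul_apply, Fin.sum_univ_six, Matrix.one_apply] <;> ring

theorem mP1_mul {R : Type} [CommRing R] (q : R) (y : Fin 3 → R) :
    mP1 q (y ∘ Equiv.swap 0 1) * mP1 q y = ((q * y 0 - y 1) * (q * y 1 - y 0)) • 1 := by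
  ext i j
  fin_cases i <;> fin_cases j <;>
    simp [mP1, Matrix.mul_apply, Fin.sum_univ_six, Matrix.one_apply, Equiv.swap_apply_def] <;> ring

theorem mP2_T {R : Type} [CommRing R] (q qi : R) (hq : q * qi = 1) (y : Fin 3 → R) :
    mP2 q y * mT q qi y = mT q qi (y ∘ Equiv.swap 1 2) * mP2 q y := by
  ext i j
  fin_cases i <;> fin_cases j <;>
    simp [mP2, mT, Matrix.mul_apply, Fin.sum_univ_six, Matrix.one_apply, Equiv.swap_apply_def] <;>
    grind

theorem mP2_S1 {R : Type} [CommRing R] (q : R) (y : Fin 3 → R) :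
    mP2 q y * mS1 q = mS1 q * mP2 q y := by
  ext i j
  fin_cases i <;> fin_cases j <;>
    simp [mP2, mS1, Matrix.mul_apply, Fin.sum_univ_six, Matrix.one_apply] <;> ring

theorem mP2_S2 {R : Type} [CommRing R] (q : R) (y : Fin 3 → R) :
    mP2 q y * mS2 q = mS2 q * mP2 q y := by
  ext i j
  fin_cases i <;> fin_cases j <;>
    simp [mP2, mS2, Matrix.mul_apply, Fin.sum_univ_six, Matrix.one_apply] <;> ring

theorem mP2_mul {R : Type} [CommRing R] (q : R) (y : Fin 3 → R) :
    mP2 q (y ∘ Equiv.swap 1 2) * mP2 q y = ((q * y 1 - y 2) * (q * y 2 - y 1)) • 1 := by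
  ext i j
  fin_cases i <;> fin_cases j <;>
    simp [mP2, Matrix.mul_apply, Fin.sum_univ_six, Matrix.one_apply, Equiv.swap_apply_def] <;> ring

end

section

/-- Determinant of a noncommutative polynomial in four matrices. -/
noncomputable def detW {S : Type} [CommRing S] (A : Fin 4 → Matrix (Fin 6) (Fin 6) S)
    (s : Finset (FreeMonoid (Fin 4))) (c : FreeMonoid (Fin 4) → S) : S :=
  (∑ w ∈ s, c w • FreeMonoid.lift A w).det

theorem detW_map {S S' : Type} [CommRing S] [CommRing S'] (φ : S →+* S')
    (A : Fin 4 → Matrix (Fin 6) (Fin 6) S)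
    (s : Finset (FreeMonoid (Fin 4))) (c : FreeMonoid (Fin 4) → S) :
    φ (detW A s c) = detW (fun i => φ.mapMatrix (A i)) s (fun w => φ (c w)) := by
  unfold detW
  rw [RingHom.map_det, map_sum]
  congr 1
  refine Finset.sum_congr rfl fun w _ => ?_
  have h1 : φ.mapMatrix (FreeMonoid.lift A w) = FreeMonoid.lift (fun i => φ.mapMatrix (A i)) w := by
    have : (RingHom.toMonoidHom φ.mapMatrix).comp (FreeMonoid.lift A) =
        FreeMonoid.lift (fun i => φ.mapMatrix (A i)) := by
      ext i; simp
    exact DFunLike.congr_fun this w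
  rw [← h1]
  ext i j
  simp

theorem detW_conj {S : Type} [CommRing S] [IsDomain S] (A B : Fin 4 → Matrix (Fin 6) (Fin 6) S)
    (P : Matrix (Fin 6) (Fin 6) S) (hP : P.det ≠ 0) (h : ∀ i, P * A i = B i * P)
    (s : Finset (FreeMonoid (Fin 4))) (c : FreeMonoid (Fin 4) → S) :
    detW A s c = detW B s c := by
  have hw : ∀ w : FreeMonoid (Fin 4), P * FreeMonoid.lift A w = FreeMonoid.lift B w * P := by
    intro w
    induction w using FreeMonoid.inductionOn' with
    | one => simp
    | of_mul a w ih =>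
      rw [map_mul, map_mul, FreeMonoid.lift_eval_of, FreeMonoid.lift_eval_of, ← mul_assoc, h,
        mul_assoc, ih, mul_assoc]
  have hs : P * (∑ w ∈ s, c w • FreeMonoid.lift A w) = (∑ w ∈ s, c w • FreeMonoid.lift B w) * P := by
    rw [Finset.mul_sum, Finset.sum_mul]
    refine Finset.sum_congr rfl fun w _ => ?_
    rw [mul_smul_comm, hw, smul_mul_assoc]
  have := congrArg Matrix.det hs
  rw [Matrix.det_mul, Matrix.det_mul, mul_comm] at this
  exact mul_right_cancel₀ hP this

theorem mG_map {S S' : Type} [CommRing S] [CommRing S'] (φ : S →+* S') (q qi ci : S)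
    (y : Fin 3 → S) (i : Fin 4) :
    φ.mapMatrix (mG q qi ci y i) = mG (φ q) (φ qi) (φ ci) (fun i => φ (y i)) i := by
  have hT : φ.mapMatrix (mT q qi y) = mT (φ q) (φ qi) (fun i => φ (y i)) := by
    ext i j; fin_cases i <;> fin_cases j <;> simp [mT]
  have h1 : φ.mapMatrix (mS1 q) = mS1 (φ q) := by
    ext i j; fin_cases i <;> fin_cases j <;> simp [mS1]
  have h2 : φ.mapMatrix (mS2 q) = mS2 (φ q) := by
    ext i j; fin_cases i <;> fin_cases j <;> simp [mS2]
  fin_cases i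
  · exact hT
  · show φ.mapMatrix (ci • (mT q qi y * mT q qi y)) = φ ci • (mT _ _ _ * mT _ _ _)
    rw [← hT, ← map_mul]
    generalize mT q qi y * mT q qi y = M
    ext i j; simp
  · exact h1
  · exact h2

theorem mG_comm {S : Type} [CommRing S] (q qi ci : S) (y z : Fin 3 → S)
    (P : Matrix (Fin 6) (Fin 6) S) (hT : P * mT q qi y = mT q qi z * P)
    (h1 : P * mS1 q = mS1 q * P) (h2 : P * mS2 q = mS2 q * P) (i : Fin 4) :
    P * mG q qi ci y i = mG q qi ci z i * P := by
  fin_cases i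
  · exact hT
  · show P * (ci • (mT q qi y * mT q qi y)) = (ci • (mT q qi z * mT q qi z)) * P
    rw [mul_smul_comm, smul_mul_assoc, ← mul_assoc, hT, mul_assoc, hT, mul_assoc]
  · exact h1
  · exact h2

theorem det_ne_of_mul {S : Type} [CommRing S] [IsDomain S] (P Q : Matrix (Fin 6) (Fin 6) S)
    (c : S) (hc : c ≠ 0) (h : Q * P = c • 1) : P.det ≠ 0 := by
  intro h0
  have := congrArg Matrix.det h
  rw [Matrix.det_mul, h0, mul_zero, Matrix.det_smul, Matrix.det_one, mul_one] at this
  exact pow_ne_zero _ hc this.symm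

open MvPolynomial in
theorem detW_swap_of {R : Type} [CommRing R] [IsDomain R] (q qi ci : R)
    (τ : Equiv.Perm (Fin 3))
    (P : Matrix (Fin 6) (Fin 6) (MvPolynomial (Fin 3) R)) (hP : P.det ≠ 0)
    (h : ∀ i, P * mG (C q) (C qi) (C ci) X i = mG (C q) (C qi) (C ci) (X ∘ τ) i * P)
    (y : Fin 3 → R) (s : Finset (FreeMonoid (Fin 4))) (c : FreeMonoid (Fin 4) → R) :
    detW (mG q qi ci y) s c = detW (mG q qi ci (y ∘ τ)) s c := by
  have := congrArg (eval y) (detW_conj _ _ P hP h s (fun w => C (c w)))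
  rw [detW_map, detW_map] at this
  simp only [mG_map, eval_C, eval_X, Function.comp_apply] at this
  exact this

open MvPolynomial in
theorem fac_ne {R : Type} [CommRing R] [IsDomain R] (q : R) (i j : Fin 3) (hij : i ≠ j) :
    (C q * X i - X j : MvPolynomial (Fin 3) R) ≠ 0 := by
  intro h
  have := congrArg (eval (fun k => if k = j then (1 : R) else 0)) h
  simp [hij] at this

open MvPolynomial in
theorem detW_swap1 {R : Type} [CommRing R] [IsDomain R] (q qi ci : R) (hq : q * qi = 1)
    (y : Fin 3 → R) (s : Finset (FreeMonoid (Fin 4))) (c : FreeMonoid (Fin 4) → R) :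
    detW (mG q qi ci y) s c = detW (mG q qi ci (y ∘ Equiv.swap 0 1)) s c := by
  refine detW_swap_of q qi ci _ (mP1 (C q) X) ?_ ?_ y s c
  · exact det_ne_of_mul _ _ _ (mul_ne_zero (fac_ne q 0 1 (by decide)) (fac_ne q 1 0 (by decide)))
      (mP1_mul _ _)
  · exact mG_comm _ _ _ _ _ _ (mP1_T _ _ (by rw [← C_mul, hq, C_1]) _) (mP1_S1 _ _) (mP1_S2 _ _)

open MvPolynomial in
theorem detW_swap2 {R : Type} [CommRing R] [IsDomain R] (q qi ci : R) (hq : q * qi = 1)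
    (y : Fin 3 → R) (s : Finset (FreeMonoid (Fin 4))) (c : FreeMonoid (Fin 4) → R) :
    detW (mG q qi ci y) s c = detW (mG q qi ci (y ∘ Equiv.swap 1 2)) s c := by
  refine detW_swap_of q qi ci _ (mP2 (C q) X) ?_ ?_ y s c
  · exact det_ne_of_mul _ _ _ (mul_ne_zero (fac_ne q 1 2 (by decide)) (fac_ne q 2 1 (by decide)))
      (mP2_mul _ _)
  · exact mG_comm _ _ _ _ _ _ (mP2_T _ _ (by rw [← C_mul, hq, C_1]) _) (mP2_S1 _ _) (mP2_S2 _ _)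

theorem detW_perm {R : Type} [CommRing R] [IsDomain R] (q qi ci : R) (hq : q * qi = 1)
    (σ : Equiv.Perm (Fin 3)) (y : Fin 3 → R) (s : Finset (FreeMonoid (Fin 4)))
    (c : FreeMonoid (Fin 4) → R) :
    detW (mG q qi ci y) s c = detW (mG q qi ci (y ∘ σ)) s c := by
  have hσ : σ ∈ Submonoid.closure (Set.range fun i : Fin 2 ↦ Equiv.swap i.castSucc i.succ) := by
    rw [Equiv.Perm.mclosure_swap_castSucc_succ]; trivial
  induction hσ using Submonoid.closure_induction generalizing y with
  | mem x hx =>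
    obtain ⟨i, rfl⟩ := hx
    fin_cases i
    · exact detW_swap1 q qi ci hq y s c
    · exact detW_swap2 q qi ci hq y s c
  | one => rfl
  | mul a b _ _ ha hb =>
    rw [ha, hb]; rfl

end

section

section
variable (p : ℕ) [Fact p.Prime] (E : Type) [Field E] [Algebra ℚ_[p] E]
  [FiniteDimensional ℚ_[p] E] [Algebra ℤ_[p] E] [IsScalarTower ℤ_[p] ℚ_[p] E] (f : ℕ)

theorem oe_of_norm (x : E) (hx : spectralNorm ℚ_[p] E x ≤ 1) : x ∈ OE p E := by
  have hm : (minpoly ℚ_[p] x).Monic := minpoly.monic (Algebra.IsIntegral.isIntegral x)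
  have h := (spectralValue_le_one_iff hm).1 hx
  have hl : minpoly ℚ_[p] x ∈ Polynomial.lifts (algebraMap ℤ_[p] ℚ_[p]) := by
    rw [Polynomial.lifts_iff_coeff_lifts]
    intro n
    exact ⟨⟨_, h n⟩, rfl⟩
  obtain ⟨P, hP, -, hPm⟩ := Polynomial.lifts_and_natDegree_eq_and_monic hl hm
  refine ⟨P, hPm, ?_⟩
  have := minpoly.aeval ℚ_[p] x
  rw [← hP, Polynomial.aeval_map_algebraMap] at this
  exact this

theorem oe_total (x : E) : x ∈ OE p E ∨ x⁻¹ ∈ OE p E := by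
  by_cases h0 : x = 0
  · left; rw [h0]; exact Subalgebra.zero_mem _
  have h1 : spectralNorm ℚ_[p] E x * spectralNorm ℚ_[p] E x⁻¹ = 1 := by
    have := map_mul (spectralMulAlgNorm ℚ_[p] E) x x⁻¹
    rw [mul_inv_cancel₀ h0, map_one] at this
    exact this.symm
  rcases le_total (spectralNorm ℚ_[p] E x) 1 with h | h
  · exact Or.inl (oe_of_norm p E x h)
  · right
    apply oe_of_norm
    have := spectralNorm_nonneg (K := ℚ_[p]) (x⁻¹ : E)
    nlinarith

/-- Among three nonzero elements, one has minimal valuation. -/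
theorem oe_min (a b : E) (ha : a ≠ 0) (hb : b ≠ 0) :
    ∃ t : E, (t = 1 ∨ t = a ∨ t = b) ∧ t⁻¹ ∈ OE p E ∧ a * t⁻¹ ∈ OE p E ∧ b * t⁻¹ ∈ OE p E := by
  have h1 : (1 : E) ∈ OE p E := Subalgebra.one_mem _
  rcases oe_total p E (a * b⁻¹) with hab | hab
  · rcases oe_total p E b with h | h
    · refine ⟨1, by simp, by simpa, ?_, by simpa⟩
      have := Subalgebra.mul_mem _ hab h
      simpa [hb] using this
    · exact ⟨b, by simp, h, hab, by simpa [hb]⟩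
  · have hab : b * a⁻¹ ∈ OE p E := by simpa [mul_comm] using hab
    rcases oe_total p E a with h | h
    · refine ⟨1, by simp, by simpa, by simpa, ?_⟩
      have := Subalgebra.mul_mem _ hab h
      simpa [ha] using this
    · exact ⟨a, by simp, h, by simpa [ha], hab⟩

theorem qE_ne : qE p E f ≠ 0 := by
  have : CharZero E :=
    charZero_of_injective_algebraMap (algebraMap ℚ_[p] E).injective
  unfold qE
  exact pow_ne_zero _ (Nat.cast_ne_zero.2 (Fact.out : p.Prime).ne_zero)

theorem qE_mem : qE p E f ∈ OE p E := by
  unfold qE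
  exact Subalgebra.pow_mem _ (natCast_mem _ p) _

theorem eval_mem (P : Polynomial ℤ) :
    Polynomial.eval₂RingHom (Int.castRingHom E) (qE p E f) P ∈ OE p E := by
  induction P using Polynomial.induction_on' with
  | add a b ha hb => rw [map_add]; exact Subalgebra.add_mem _ ha hb
  | monomial n a =>
    simp only [Polynomial.coe_eval₂RingHom, Polynomial.eval₂_monomial]
    exact Subalgebra.mul_mem _ (intCast_mem _ a) (Subalgebra.pow_mem _ (qE_mem p E f) _)

theorem intCond_perm (y : Fin 3 → Eˣ) (hy : IntCond p E f y) (σ : Equiv.Perm (Fin 3)) :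
    IntCond p E f (y ∘ σ) := by
  have h : (y ∘ σ) 0 * (y ∘ σ) 1 * (y ∘ σ) 2 = y 0 * y 1 * y 2 := by
    have := Equiv.prod_comp σ y
    simpa [Fin.prod_univ_three] using this
  refine ⟨by rw [h]; exact hy.1, by rw [h]; exact hy.2.1, fun i j hij => ?_⟩
  exact hy.2.2 (σ i) (σ j) (fun e => hij (σ.injective e))
end

end

section

namespace HeckeAlg

theorem map_gen {R S : Type} [CommRing R] [CommRing S] (f : R →+* S) (q : R) (q' : S)
    (h : f q = q') (i : Fin 4) : map f q q' h (gen R q i) = gen S q' i := by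
  subst h
  letI : Algebra R (HeckeAlg S (f q)) :=
    RingHom.toAlgebra' ((algebraMap S (HeckeAlg S (f q))).comp f)
      (fun c x => by simpa using Algebra.commutes (f c) x)
  unfold map gen
  rw [← AlgHom.coe_toRingHom (RingQuot.mkAlgHom R (HeckeRel R q)), RingQuot.mkAlgHom_coe]
  exact (RingQuot.lift_mkRingHom_apply _ _ _).trans (FreeAlgebra.lift_ι_apply _ _)

theorem map_alg {R S : Type} [CommRing R] [CommRing S] (f : R →+* S) (q : R) (q' : S)
    (h : f q = q') (c : R) : map f q q' h (algebraMap R _ c) = algebraMap S _ (f c) := by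
  subst h
  letI : Algebra R (HeckeAlg S (f q)) :=
    RingHom.toAlgebra' ((algebraMap S (HeckeAlg S (f q))).comp f)
      (fun c x => by simpa using Algebra.commutes (f c) x)
  rw [← (RingQuot.mkAlgHom R (HeckeRel R q)).commutes c]
  unfold map
  rw [← AlgHom.coe_toRingHom (RingQuot.mkAlgHom R (HeckeRel R q)), RingQuot.mkAlgHom_coe]
  exact (RingQuot.lift_mkRingHom_apply _ _ _).trans (AlgHom.commutes _ c)

/-- Induction principle. -/
theorem ind {R : Type} [CommRing R] (q : R) (C : HeckeAlg R q → Prop)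
    (halg : ∀ c, C (algebraMap R _ c)) (hgen : ∀ i, C (gen R q i))
    (hadd : ∀ a b, C a → C b → C (a + b)) (hmul : ∀ a b, C a → C b → C (a * b))
    (a : HeckeAlg R q) : C a := by
  obtain ⟨g, rfl⟩ := RingQuot.mkAlgHom_surjective R (HeckeRel R q) a
  induction g using FreeAlgebra.induction with
  | grade0 c => rw [AlgHom.commutes]; exact halg c
  | grade1 i => exact hgen i
  | mul a b ha hb => rw [map_mul]; exact hmul _ _ ha hb
  | add a b ha hb => rw [map_add]; exact hadd _ _ ha hb

section
variable {E : Type} [Field E] (q : E)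

theorem sub_smul' (x : HeckeAlg E q) : (q - 1) • x = q • x - x := by
  rw [Algebra.smul_def, map_sub, sub_mul, map_one, one_mul, ← Algebra.smul_def]

theorem S1_sq : S1 E q * S1 E q = (q - 1) • S1 E q + q • 1 := by
  have := quad_rel E q
  rw [Algebra.algebraMap_eq_smul_one] at this
  simp only [add_mul, mul_sub, one_mul, mul_smul_comm, mul_one] at this
  rw [sub_smul', ← sub_eq_zero, ← this, smul_add]
  abel

theorem S2_eq : S2 E q = Tinv E q * S1 E q * T E q := by
  rw [mul_assoc, ← T_mul_S2, ← mul_assoc, Tinv_mul_T, one_mul]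

theorem S2_sq : S2 E q * S2 E q = (q - 1) • S2 E q + q • 1 := by
  have h : S2 E q * S2 E q = Tinv E q * (S1 E q * S1 E q) * T E q := by
    calc S2 E q * S2 E q = Tinv E q * S1 E q * (T E q * S2 E q) := by
          rw [← mul_assoc (Tinv E q * S1 E q), ← S2_eq]
      _ = _ := by rw [T_mul_S2]; simp only [mul_assoc]
  rw [h, S1_sq, mul_add, add_mul, mul_smul_comm, mul_smul_comm, mul_one, smul_mul_assoc,
    smul_mul_assoc, ← S2_eq, Tinv_mul_T]

theorem S1_mul_S1i (hq : q ≠ 0) : S1 E q * S1i E q q⁻¹ = 1 := by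
  rw [S1i, ← Algebra.smul_def, Algebra.algebraMap_eq_smul_one, mul_smul_comm, mul_add, mul_sub,
    S1_sq, mul_smul_comm, mul_one, sub_smul']
  rw [show q • S1 E q - S1 E q + q • 1 - q • S1 E q + S1 E q = q • (1 : HeckeAlg E q) by abel]
  rw [smul_smul, inv_mul_cancel₀ hq, one_smul]

theorem S2_mul_S2i (hq : q ≠ 0) : S2 E q * S2i E q q⁻¹ = 1 := by
  rw [S2i, ← Algebra.smul_def, Algebra.algebraMap_eq_smul_one, mul_smul_comm, mul_add, mul_sub,
    S2_sq, mul_smul_comm, mul_one, sub_smul']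
  rw [show q • S2 E q - S2 E q + q • 1 - q • S2 E q + S2 E q = q • (1 : HeckeAlg E q) by abel]
  rw [smul_smul, inv_mul_cancel₀ hq, one_smul]

variable {M : Type} [AddCommGroup M] [Module (HeckeAlg E q) M] [Module E M]
  [IsScalarTower E (HeckeAlg E q) M]

/-- The six vectors `S_w v`. -/
noncomputable def Bw (v : M) : Fin 6 → M :=
  ![v, S1 E q • v, S2 E q • v, S1 E q • S2 E q • v, S2 E q • S1 E q • v,
    S1 E q • S2 E q • S1 E q • v]

theorem S1_act (v : M) (w : Fin 6) :
    S1 E q • Bw q v w = ∑ l, mS1 q l w • Bw q v l := by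
  have h (x : M) : S1 E q • S1 E q • x = q • x + (q - 1) • S1 E q • x := by
    rw [smul_smul, S1_sq, add_smul, smul_assoc, smul_assoc, one_smul, add_comm]
  fin_cases w <;> simp [mS1, Fin.sum_univ_six, Bw, h]

theorem S2_act (v : M) (w : Fin 6) :
    S2 E q • Bw q v w = ∑ l, mS2 q l w • Bw q v l := by
  have h (x : M) : S2 E q • S2 E q • x = q • x + (q - 1) • S2 E q • x := by
    rw [smul_smul, S2_sq, add_smul, smul_assoc, smul_assoc, one_smul, add_comm]
  have hb (x : M) : S1 E q • S2 E q • S1 E q • x = S2 E q • S1 E q • S2 E q • x := by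
    have := braid_rel E q
    simp only [smul_smul, ← mul_assoc, this]
  fin_cases w <;> simp [mS2, Fin.sum_univ_six, Bw, h, hb]

theorem T_act (hq : q ≠ 0) (v : M) (y : Fin 3 → E) (hv : ∀ i, Y E q q⁻¹ i • v = y i • v)
    (w : Fin 6) :
    T E q • Bw q v w = ∑ l, mT q q⁻¹ y l w • Bw q v l := by
  have h0 : T E q • v = (q⁻¹ * y 0) • S2 E q • S1 E q • v := by
    have h := congrArg (fun x => q⁻¹ • S2 E q • S1 E q • x) (hv 0)
    simp only [Y, Matrix.cons_val_zero, mul_smul, algebraMap_smul] at h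
    rw [smul_comm (S1 E q) q, smul_comm (S2 E q) q, smul_smul q⁻¹ q, inv_mul_cancel₀ hq, one_smul,
      smul_smul (S1 E q), S1_mul_S1i q hq, one_smul, smul_smul (S2 E q), S2_mul_S2i q hq,
      one_smul, smul_comm (S1 E q) (y 0), smul_comm (S2 E q) (y 0)] at h
    rw [h, mul_smul]
  have h1 : T E q • S1 E q • v = y 1 • S2 E q • v := by
    have h := congrArg (fun x => S2 E q • x) (hv 1)
    simp only [Y, Matrix.cons_val_one, Matrix.cons_val_zero, mul_smul] at h
    rw [smul_smul (S2 E q), S2_mul_S2i q hq, one_smul, smul_comm (S2 E q) (y 1)] at h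
    exact h
  have h2 : T E q • S1 E q • S2 E q • v = (q * y 2) • v := by
    have h := congrArg (fun x => q • x) (hv 2)
    simp only [Y, Matrix.cons_val, mul_smul, algebraMap_smul] at h
    rw [smul_smul q q⁻¹, mul_inv_cancel₀ hq, one_smul] at h
    rw [h, mul_smul]
  have hs (x : M) : T E q • S2 E q • x = S1 E q • T E q • x := by
    simp only [smul_smul, T_mul_S2]
  have hb : S1 E q • S2 E q • S1 E q • v = S2 E q • S1 E q • S2 E q • v := by
    have := braid_rel E q
    simp only [smul_smul, ← mul_assoc, this]
  fin_cases w
  · simp [mT, Fin.sum_univ_six, Bw, h0]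
  · simp [mT, Fin.sum_univ_six, Bw, h1]
  · simp [mT, Fin.sum_univ_six, Bw, hs, h0, smul_comm (S1 E q) (q⁻¹ * y 0)]
  · simp [mT, Fin.sum_univ_six, Bw, h2]
  · simp [mT, Fin.sum_univ_six, Bw, hs, h1, smul_comm (S1 E q) (y 1)]
  · simp [mT, Fin.sum_univ_six, Bw, hs, hb, h2, smul_comm (S1 E q) (q * y 2)]

theorem gen_act (hq : q ≠ 0) (v : M) (y : Fin 3 → E) (hv : ∀ i, Y E q q⁻¹ i • v = y i • v)
    (ci : E) (hci : ci * (y 0 * y 1 * y 2) = 1) (i : Fin 4) (w : Fin 6) :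
    gen E q i • Bw q v w = ∑ l, mG q q⁻¹ ci y i l w • Bw q v l := by
  have hT := T_act q hq v y hv
  fin_cases i
  · exact hT w
  · show Tinv E q • Bw q v w = ∑ l, (ci • (mT q q⁻¹ y * mT q q⁻¹ y)) l w • Bw q v l
    have comp (h h' : HeckeAlg E q) (A A' : Matrix (Fin 6) (Fin 6) E)
        (hA : ∀ w, h • Bw q v w = ∑ l, A l w • Bw q v l)
        (hA' : ∀ w, h' • Bw q v w = ∑ l, A' l w • Bw q v l) (w : Fin 6) :
        (h * h') • Bw q v w = ∑ l, (A * A') l w • Bw q v l := by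
      rw [mul_smul, hA', Finset.smul_sum]
      simp only [smul_comm h, hA, Finset.smul_sum, Matrix.mul_apply, Finset.sum_smul]
      rw [Finset.sum_comm]
      refine Finset.sum_congr rfl fun l _ => Finset.sum_congr rfl fun k _ => ?_
      rw [smul_smul, mul_comm]
    have h2 := comp _ _ _ _ hT hT
    have h3 := comp _ _ _ _ hT h2
    rw [mT_cube q q⁻¹ (mul_inv_cancel₀ hq)] at h3
    have h3' : (T E q * (T E q * T E q)) • Bw q v w = (y 0 * y 1 * y 2) • Bw q v w := by
      rw [h3]; simp [Matrix.one_apply]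
    have h4 : Tinv E q • Bw q v w = ci • (T E q * T E q) • Bw q v w := by
      have := congrArg (fun x => ci • Tinv E q • x) h3'
      simp only [smul_smul (Tinv E q), ← mul_assoc, Tinv_mul_T, one_mul] at this
      rw [this, smul_comm (Tinv E q), smul_smul, hci, one_smul]
    rw [h4, h2, Finset.smul_sum]
    simp [mul_smul]
  · exact S1_act q v w
  · exact S2_act q v w
end
end HeckeAlg

end

section

section
variable {E : Type} [Field E] (q : E)

theorem mvT (y : Fin 3 → E) (j : Fin 6) :
    (mT q q⁻¹ y).mulVec (Pi.single j 1) =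
      ![(q⁻¹ * y 0) • Pi.single 4 1, y 1 • Pi.single 2 1, (q⁻¹ * y 0) • Pi.single 5 1,
        (q * y 2) • Pi.single 0 1, y 1 • Pi.single 3 1, (q * y 2) • Pi.single 1 1] j := by
  rw [Matrix.mulVec_single_one]
  ext i
  fin_cases j <;> fin_cases i <;> simp [mT, Matrix.col_apply, Pi.single_apply]

theorem mvS1 (j : Fin 6) :
    (mS1 q).mulVec (Pi.single j 1) =
      ![Pi.single 1 1, q • Pi.single 0 1 + (q - 1) • Pi.single 1 1, Pi.single 3 1,
        q • Pi.single 2 1 + (q - 1) • Pi.single 3 1, Pi.single 5 1,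
        q • Pi.single 4 1 + (q - 1) • Pi.single 5 1] j := by
  rw [Matrix.mulVec_single_one]
  ext i
  fin_cases j <;> fin_cases i <;> simp [mS1, Matrix.col_apply, Pi.single_apply]

theorem mvS2 (j : Fin 6) :
    (mS2 q).mulVec (Pi.single j 1) =
      ![Pi.single 2 1, Pi.single 4 1, q • Pi.single 0 1 + (q - 1) • Pi.single 2 1,
        Pi.single 5 1, q • Pi.single 1 1 + (q - 1) • Pi.single 4 1,
        q • Pi.single 3 1 + (q - 1) • Pi.single 5 1] j := by
  rw [Matrix.mulVec_single_one]
  ext i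
  fin_cases j <;> fin_cases i <;> simp [mS2, Matrix.col_apply, Pi.single_apply]

open HeckeAlg

/-- The matrix representation. -/
theorem exists_rep (hq : q ≠ 0) (y : Fin 3 → E) (ci : E) (hci : ci * (y 0 * y 1 * y 2) = 1) :
    ∃ φ : HeckeAlg E q →ₐ[E] Matrix (Fin 6) (Fin 6) E,
      ∀ i, φ (gen E q i) = mG q q⁻¹ ci y i := by
  have hc := mT_cube q q⁻¹ (mul_inv_cancel₀ hq) y
  refine ⟨RingQuot.liftAlgHom E ⟨FreeAlgebra.lift E (mG q q⁻¹ ci y), ?_⟩, fun i => ?_⟩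
  · intro a b hab
    cases hab with
    | TTinv =>
      simp only [map_mul, FreeAlgebra.lift_ι_apply, map_one]
      show mT q q⁻¹ y * (ci • (mT q q⁻¹ y * mT q q⁻¹ y)) = 1
      rw [mul_smul_comm, hc, smul_smul, hci, one_smul]
    | TinvT =>
      simp only [map_mul, FreeAlgebra.lift_ι_apply, map_one]
      show (ci • (mT q q⁻¹ y * mT q q⁻¹ y)) * mT q q⁻¹ y = 1
      rw [smul_mul_assoc, mul_assoc, hc, smul_smul, hci, one_smul]
    | quad =>
      simp only [map_mul, map_add, map_sub, FreeAlgebra.lift_ι_apply, map_one, map_zero,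
        AlgHom.commutes]
      rw [Algebra.algebraMap_eq_smul_one]
      exact mS1_quad q
    | T3S1 =>
      simp only [map_mul, map_pow, FreeAlgebra.lift_ι_apply]
      show mT q q⁻¹ y ^ 3 * mS1 q = mS1 q * mT q q⁻¹ y ^ 3
      rw [pow_succ', pow_two, hc, smul_mul_assoc, mul_smul_comm, one_mul, mul_one]
    | braid =>
      simp only [map_mul, FreeAlgebra.lift_ι_apply]
      exact m_braid q
    | TS2 =>
      simp only [map_mul, FreeAlgebra.lift_ι_apply]
      exact mT_S2 q q⁻¹ (mul_inv_cancel₀ hq) y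
  · unfold gen
    rw [RingQuot.liftAlgHom_mkAlgHom_apply, FreeAlgebra.lift_ι_apply]

theorem rep_Y (hq : q ≠ 0) (y : Fin 3 → E) (ci : E)
    (φ : HeckeAlg E q →ₐ[E] Matrix (Fin 6) (Fin 6) E)
    (hφ : ∀ i, φ (gen E q i) = mG q q⁻¹ ci y i) (i : Fin 3) :
    (φ (Y E q q⁻¹ i)).mulVec (Pi.single 0 1) = y i • Pi.single 0 1 := by
  have hT : φ (T E q) = mT q q⁻¹ y := hφ 0
  have h1 : φ (S1 E q) = mS1 q := hφ 2
  have h2 : φ (S2 E q) = mS2 q := hφ 3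
  have i1 : (φ (S1i E q q⁻¹)).mulVec (Pi.single 1 1) = Pi.single 0 1 := by
    simp only [S1i, map_mul, map_add, map_sub, map_one, AlgHom.commutes, h1]
    rw [Algebra.algebraMap_eq_smul_one, Algebra.algebraMap_eq_smul_one, Matrix.smul_mul, one_mul,
      Matrix.smul_mulVec, Matrix.add_mulVec, Matrix.sub_mulVec, mvS1, Matrix.smul_mulVec,
      Matrix.one_mulVec]
    ext j; fin_cases j <;> simp [Pi.single_apply, hq]
  have i2 : (φ (S2i E q q⁻¹)).mulVec (Pi.single 4 1) = Pi.single 1 1 := by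
    simp only [S2i, map_mul, map_add, map_sub, map_one, AlgHom.commutes, h2]
    rw [Algebra.algebraMap_eq_smul_one, Algebra.algebraMap_eq_smul_one, Matrix.smul_mul, one_mul,
      Matrix.smul_mulVec, Matrix.add_mulVec, Matrix.sub_mulVec, mvS2, Matrix.smul_mulVec,
      Matrix.one_mulVec]
    ext j; fin_cases j <;> simp [Pi.single_apply, hq]
  have i2' : (φ (S2i E q q⁻¹)).mulVec (Pi.single 2 1) = Pi.single 0 1 := by
    simp only [S2i, map_mul, map_add, map_sub, map_one, AlgHom.commutes, h2]
    rw [Algebra.algebraMap_eq_smul_one, Algebra.algebraMap_eq_smul_one, Matrix.smul_mul, one_mul,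
      Matrix.smul_mulVec, Matrix.add_mulVec, Matrix.sub_mulVec, mvS2, Matrix.smul_mulVec,
      Matrix.one_mulVec]
    ext j; fin_cases j <;> simp [Pi.single_apply, hq]
  fin_cases i
  · simp only [Y, Fin.zero_eta, Matrix.cons_val_zero, map_mul, AlgHom.commutes, hT]
    simp only [Algebra.algebraMap_eq_smul_one, Matrix.cons_val, ← Matrix.mulVec_mulVec, mvT, Matrix.mulVec_smul, i2, i1,
      Matrix.smul_mulVec, Matrix.one_mulVec, smul_smul]
    congr 1; field_simp
  · simp only [Y, Fin.mk_one, Matrix.cons_val_one, Matrix.cons_val_zero, map_mul, hT, h1,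
      ← Matrix.mulVec_mulVec, mvS1, mvT, Matrix.mulVec_smul, i2']
  · simp only [Y, Fin.reduceFinMk, Matrix.cons_val, map_mul, AlgHom.commutes, hT, h1, h2]
    simp only [Algebra.algebraMap_eq_smul_one, Matrix.cons_val, ← Matrix.mulVec_mulVec, mvS2, mvS1, mvT, Matrix.mulVec_smul,
      Matrix.smul_mulVec, Matrix.one_mulVec, smul_smul]
    congr 1; field_simp

/-- A subset closed under sums, the scalars of the image of `R` and the generators. -/
theorem closed_of_gens {R : Type} [CommRing R] (q : R) {M : Type} [AddCommGroup M]
    (act : HeckeAlg R q →+* Module.End ℤ M) (N : Set M)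
    (hadd : ∀ x ∈ N, ∀ y ∈ N, x + y ∈ N)
    (halg : ∀ c : R, ∀ x ∈ N, act (algebraMap R _ c) x ∈ N)
    (hgen : ∀ i, ∀ x ∈ N, act (gen R q i) x ∈ N) (h : HeckeAlg R q) : ∀ x ∈ N, act h x ∈ N := by
  induction h using HeckeAlg.ind with
  | halg c => exact halg c
  | hgen i => exact hgen i
  | hadd a b ha hb => intro x hx; rw [map_add]; exact hadd _ (ha x hx) _ (hb x hx)
  | hmul a b ha hb => intro x hx; rw [map_mul]; exact ha _ (hb x hx)
end

section
variable (p : ℕ) [Fact p.Prime] (E : Type) [Field E] [Algebra ℚ_[p] E]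
  [FiniteDimensional ℚ_[p] E] [Algebra ℤ_[p] E] [IsScalarTower ℤ_[p] ℚ_[p] E] (f : ℕ)
  (u : Fin 3 → HE p E f) (χ : AE p E f u →ₐ[E] E)

instance stdTower : IsScalarTower E (HE p E f) (StdMod p E f u χ) := by
  unfold StdMod
  exact inferInstanceAs (IsScalarTower E (HE p E f) (HE p E f ⧸ Jχ p E f u χ))

/-- The canonical map. -/
def stdMk : HE p E f →ₗ[HE p E f] StdMod p E f u χ := (Jχ p E f u χ).mkQ

theorem stdMk_eq (h : HE p E f) : stdMk p E f u χ h = h • stdMk p E f u χ 1 := by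
  rw [← map_smul, smul_eq_mul, mul_one]

theorem stdMk_surj : Function.Surjective (stdMk p E f u χ) := (Jχ p E f u χ).mkQ_surjective

theorem stdMk_eq_zero (h : HE p E f) : stdMk p E f u χ h = 0 ↔ h ∈ Jχ p E f u χ :=
  Submodule.Quotient.mk_eq_zero _

theorem stdMk_Y (i : Fin 3) : YE p E f i • stdMk p E f u χ 1 =
    yval p E f u χ i • stdMk p E f u χ 1 := by
  have h : YE p E f i - algebraMap E _ (yval p E f u χ i) ∈ Jχ p E f u χ :=
    Submodule.subset_span ⟨⟨YE p E f i, _⟩, rfl⟩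
  rw [← stdMk_eq_zero, map_sub, stdMk_eq, stdMk_eq p E f u χ (algebraMap E _ _), algebraMap_smul,
    sub_eq_zero] at h
  exact h

open HeckeAlg

theorem J_kill (hu : ∀ i, YE p E f i * u i = 1 ∧ u i * YE p E f i = 1) (y : Fin 3 → E)
    (hy : ∀ i, yval p E f u χ i = y i) (ci : E) 
    (φ : HE p E f →ₐ[E] Matrix (Fin 6) (Fin 6) E)
    (hφ : ∀ i, φ (gen E (qE p E f) i) = mG (qE p E f) (qE p E f)⁻¹ ci y i)
    (x : HE p E f) (hx : x ∈ Jχ p E f u χ) : (φ x).mulVec (Pi.single 0 1) = 0 := by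
  have hY := rep_Y _ (qE_ne p E f) y ci φ hφ
  have key : ∀ (a : HE p E f) (ha : a ∈ AE p E f u),
      (φ a).mulVec (Pi.single 0 1) = χ ⟨a, ha⟩ • Pi.single 0 1 := by
    intro a ha
    induction ha using Algebra.adjoin_induction with
    | mem a ha =>
      rcases ha with ⟨i, rfl⟩ | ⟨i, rfl⟩
      · exact (hY i).trans (by rw [← hy i]; rfl)
      · have hmem : u i ∈ AE p E f u := Algebra.subset_adjoin (Or.inr ⟨i, rfl⟩)
        have h1 : χ ⟨u i, hmem⟩ * y i = 1 := by
          rw [← hy i, yval, ← map_mul, ← map_one χ]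
          congr 1
          exact Subtype.ext (hu i).2
        have h2 : (φ (u i)).mulVec (y i • Pi.single 0 1) = Pi.single 0 1 := by
          rw [← hY i, Matrix.mulVec_mulVec, ← map_mul]
          erw [(hu i).2]
          rw [map_one, Matrix.one_mulVec]
        rw [Matrix.mulVec_smul] at h2
        conv_rhs => rw [← h2]
        rw [smul_smul]
        erw [h1]
        rw [one_smul]
    | algebraMap c =>
      rw [AlgHom.commutes]
      have : χ ⟨algebraMap E _ c, Subalgebra.algebraMap_mem _ c⟩ = c := χ.commutes c
      rw [this, Algebra.algebraMap_eq_smul_one, Matrix.smul_mulVec, Matrix.one_mulVec]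
    | add a b ha hb iha ihb =>
      rw [map_add, Matrix.add_mulVec, iha, ihb, ← add_smul, ← map_add]; rfl
    | mul a b ha hb iha ihb =>
      rw [map_mul, ← Matrix.mulVec_mulVec, ihb, Matrix.mulVec_smul, iha, smul_smul, mul_comm,
        ← map_mul]; rfl
  unfold Jχ at hx
  induction hx using Submodule.span_induction with
  | mem x hx =>
    obtain ⟨a, rfl⟩ := hx
    rw [map_sub, Matrix.sub_mulVec, key a.1 a.2, AlgHom.commutes, Algebra.algebraMap_eq_smul_one,
      Matrix.smul_mulVec, Matrix.one_mulVec, sub_self]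
  | zero => rw [map_zero, Matrix.zero_mulVec]
  | add a b _ _ ha hb => rw [map_add, Matrix.add_mulVec, ha, hb, add_zero]
  | smul a b _ hb => rw [smul_eq_mul, map_mul, ← Matrix.mulVec_mulVec, hb, Matrix.mulVec_zero]

theorem std_basis (hu : ∀ i, YE p E f i * u i = 1 ∧ u i * YE p E f i = 1) (y : Fin 3 → E)
    (hy : ∀ i, yval p E f u χ i = y i) (ci : E) (hci : ci * (y 0 * y 1 * y 2) = 1) :
    ∃ B : Module.Basis (Fin 6) E (StdMod p E f u χ), ∀ i w,
      gen E (qE p E f) i • B w = ∑ l, mG (qE p E f) (qE p E f)⁻¹ ci y i l w • B l := by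
  obtain ⟨φ, hφ⟩ := exists_rep _ (qE_ne p E f) y ci hci
  have hkill := J_kill p E f u χ hu y hy ci φ hφ
  set v := stdMk p E f u χ 1 with hv
  have hact := gen_act (qE p E f) (qE_ne p E f) v y
    (fun i => (stdMk_Y p E f u χ i).trans (by rw [hy i])) ci hci
  have hli : LinearIndependent E (Bw (qE p E f) v) := by
    rw [Fintype.linearIndependent_iff]
    intro c hc
    have e : (∑ w, c w • Bw (qE p E f) v w) = stdMk p E f u χ (∑ w, c w • Bw (qE p E f) (1 : HE p E f) w) := by
      rw [map_sum]
      refine Finset.sum_congr rfl fun w _ => ?_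
      rw [stdMk_eq, smul_assoc]
      congr 1
      fin_cases w <;> simp [Bw, mul_smul, hv]
    rw [e, stdMk_eq_zero] at hc
    have h := hkill _ hc
    have hT : φ (T E (qE p E f)) = mT (qE p E f) (qE p E f)⁻¹ y := hφ 0
    have h1 : φ (S1 E (qE p E f)) = mS1 (qE p E f) := hφ 2
    have h2 : φ (S2 E (qE p E f)) = mS2 (qE p E f) := hφ 3
    have hw : ∀ w, (φ (Bw (qE p E f) (1 : HE p E f) w)).mulVec (Pi.single 0 1) = Pi.single w 1 := by
      intro w
      fin_cases w <;>
        simp [Bw, map_mul, h1, h2, ← Matrix.mulVec_mulVec, mvS1, mvS2, -Matrix.mulVec_single_one,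
          -Matrix.mulVec_single]
    rw [map_sum, Matrix.sum_mulVec] at h
    simp only [map_smul, Matrix.smul_mulVec, hw] at h
    intro i
    have := congrFun h i
    simpa [Finset.sum_apply, Pi.single_apply] using this
  have hsp : ⊤ ≤ Submodule.span E (Set.range (Bw (qE p E f) v)) := by
    rintro x -
    obtain ⟨h, rfl⟩ := stdMk_surj p E f u χ x
    rw [stdMk_eq]
    refine closed_of_gens (qE p E f) (Module.toModuleEnd ℤ (S := HE p E f) (StdMod p E f u χ))
      (Submodule.span E (Set.range (Bw (qE p E f) v))) (fun x hx y hy => Submodule.add_mem _ hx hy)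
      (fun c x hx => ?_) (fun i x hx => ?_) h _ (Submodule.subset_span ⟨0, rfl⟩)
    · show algebraMap E (HE p E f) c • x ∈ _
      rw [algebraMap_smul]
      exact Submodule.smul_mem _ c hx
    · show gen E (qE p E f) i • x ∈ _
      induction hx using Submodule.span_induction with
      | mem x hx =>
        obtain ⟨w, rfl⟩ := hx
        rw [hact]
        exact Submodule.sum_mem _ fun l _ => Submodule.smul_mem _ _ (Submodule.subset_span ⟨l, rfl⟩)
      | zero => rw [smul_zero]; exact Submodule.zero_mem _
      | add a b _ _ ha hb => rw [smul_add]; exact Submodule.add_mem _ ha hb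
      | smul c a _ ha => rw [smul_comm]; exact Submodule.smul_mem _ _ ha
  exact ⟨Module.Basis.mk hli hsp, fun i w => by simpa using hact i w⟩
end

end

section

section
variable (p : ℕ) [Fact p.Prime] (E : Type) [Field E] [Algebra ℚ_[p] E]
  [FiniteDimensional ℚ_[p] E] [Algebra ℤ_[p] E] [IsScalarTower ℤ_[p] ℚ_[p] E] (f : ℕ)
  (u : Fin 3 → HE p E f) (χ : AE p E f u →ₐ[E] E)

open HeckeAlg

theorem ιE_gen (i : Fin 4) : ιE p E f (gen _ _ i) = gen E (qE p E f) i :=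
  map_gen _ _ _ _ i

theorem ιE_alg (c : Polynomial ℤ) : ιE p E f (algebraMap _ _ c) =
    algebraMap E (HE p E f) (Polynomial.eval₂RingHom (Int.castRingHom E) (qE p E f) c) :=
  map_alg _ _ _ _ c

theorem ιF_gen (i : Fin 4) : ιF p (gen _ _ i) = gen (Fbar p) 0 i :=
  map_gen _ _ _ _ i

theorem int_of_basis (B : Module.Basis (Fin 6) E (StdMod p E f u χ))
    (N : Fin 4 → Matrix (Fin 6) (Fin 6) E)
    (hB : ∀ i w, gen E (qE p E f) i • B w = ∑ l, N i l w • B l)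
    (hN : ∀ i l w, N i l w ∈ OE p E) :
    IsIntegralStructure p E f u χ {x | ∀ w, B.repr x w ∈ OE p E} := by
  have hadd : ∀ x ∈ {x | ∀ w, B.repr x w ∈ OE p E}, ∀ y ∈ {x | ∀ w, B.repr x w ∈ OE p E},
      x + y ∈ {x | ∀ w, B.repr x w ∈ OE p E} := by
    intro x hx y hy w
    rw [map_add]
    exact Subalgebra.add_mem _ (hx w) (hy w)
  have hsmul : ∀ c ∈ OE p E, ∀ x ∈ {x | ∀ w, B.repr x w ∈ OE p E},
      c • x ∈ {x | ∀ w, B.repr x w ∈ OE p E} := by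
    intro c hc x hx w
    rw [map_smul]
    exact Subalgebra.mul_mem _ hc (hx w)
  have hmem : ∀ i, B i ∈ {x | ∀ w, B.repr x w ∈ OE p E} := by
    intro i w
    rw [B.repr_self, Finsupp.single_apply]
    split_ifs
    · exact Subalgebra.one_mem _
    · exact Subalgebra.zero_mem _
  refine ⟨?_, hadd, ?_, ?_, ?_, ?_⟩
  · intro w
    simp only [map_zero, Finsupp.coe_zero, Pi.zero_apply]
    exact Subalgebra.zero_mem _
  · intro c x hx
    exact hsmul c c.2 x hx
  · intro h x hx
    refine closed_of_gens _
      ((Module.toModuleEnd ℤ (S := HE p E f) (StdMod p E f u χ)).comp (ιE p E f)) _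
      hadd ?_ ?_ h x hx
    · intro c x hx
      show ιE p E f (algebraMap _ _ c) • x ∈ _
      rw [ιE_alg, algebraMap_smul]
      exact hsmul _ (eval_mem p E f c) x hx
    · intro i x hx
      show ιE p E f (gen _ _ i) • x ∈ _
      rw [ιE_gen]
      intro w
      have : gen E (qE p E f) i • x = ∑ l, (∑ k, N i l k * B.repr x k) • B l := by
        conv_lhs => rw [← B.sum_repr x]
        rw [Finset.smul_sum]
        simp only [smul_comm (gen E (qE p E f) i), hB, Finset.smul_sum, Finset.sum_smul]
        rw [Finset.sum_comm]
        refine Finset.sum_congr rfl fun l _ => Finset.sum_congr rfl fun k _ => ?_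
        rw [smul_smul, mul_comm]
      rw [this, B.repr_sum_self]
      exact Subalgebra.sum_mem _ fun k _ => Subalgebra.mul_mem _ (hN i w k) (hx k)
  · refine ⟨6, B, hmem, fun x hx => ⟨fun w => ⟨B.repr x w, hx w⟩, ?_, ?_⟩⟩
    · exact (B.sum_repr x).symm
    · intro c hc
      ext w
      have hc : x = ∑ i, (c i : E) • B i := hc
      show (c w : E) = B.repr x w
      rw [hc, B.repr_sum_self]
  · exact ⟨6, B, hmem⟩

set_option maxHeartbeats 1000000 in
theorem conj_int {K : Type} [Field K] (O : Subring K) (q : K) (y : Fin 3 → K) (t : K)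
    (hq : q ≠ 0) (h0 : y 0 ≠ 0) (h1 : y 1 ≠ 0) (h2 : y 2 ≠ 0) (ht : t ≠ 0) (hqm : q ∈ O)
    (c1 : y 0 * y 1 * y 2 ∈ O) (c2 : (y 0 * y 1 * y 2)⁻¹ ∈ O) (t1 : t⁻¹ ∈ O) (t2 : y 0 * t⁻¹ ∈ O)
    (t3 : (y 1)⁻¹ * t⁻¹ ∈ O) (t4 : q * t ∈ O) (t5 : q * t * (y 0)⁻¹ ∈ O) (t6 : q * t * y 1 ∈ O) :
    ∃ d : Fin 6 → Kˣ, ∀ i l w,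
      (d l : K)⁻¹ * (mG q q⁻¹ (y 0 * y 1 * y 2)⁻¹ y i l w * d w) ∈ O := by
  let D : Fin 6 → K := ![1, t, t * y 1, y 0 * y 1 * q⁻¹, y 0 * q⁻¹, t * y 1 * y 0 * q⁻¹]
  have hD : ∀ i, D i ≠ 0 := by
    intro i
    fin_cases i <;> simp [D, hq, h0, h1, ht]
  have z0 : (0 : K) ∈ O := O.zero_mem
  have z1 : (1 : K) ∈ O := O.one_mem
  have z2 : q - 1 ∈ O := O.sub_mem hqm z1
  have hT : ∀ l w, (D l)⁻¹ * (mT q q⁻¹ y l w * D w) ∈ O := by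
    have e : ∀ l w, (D l)⁻¹ * (mT q q⁻¹ y l w * D w) =
      !![0, 0, 0, y 0 * y 1 * y 2, 0, 0;
         0, 0, 0, 0, 0, y 0 * y 1 * y 2;
         0, 1, 0, 0, 0, 0;
         0, 0, 0, 0, 1, 0;
         1, 0, 0, 0, 0, 0;
         0, 0, 1, 0, 0, 0] l w := by
      intro l w
      fin_cases l <;> fin_cases w <;> simp [D, mT] <;> field_simp
    intro l w
    rw [e]
    fin_cases l <;> fin_cases w <;> simp <;> assumption
  have hS1 : ∀ l w, (D l)⁻¹ * (mS1 q l w * D w) ∈ O := by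
    have e : ∀ l w, (D l)⁻¹ * (mS1 q l w * D w) =
      !![0, q * t, 0, 0, 0, 0;
         t⁻¹, q - 1, 0, 0, 0, 0;
         0, 0, 0, y 0 * t⁻¹, 0, 0;
         0, 0, q * t * (y 0)⁻¹, q - 1, 0, 0;
         0, 0, 0, 0, 0, q * t * y 1;
         0, 0, 0, 0, (y 1)⁻¹ * t⁻¹, q - 1] l w := by
      intro l w
      fin_cases l <;> fin_cases w <;> simp [D, mS1] <;> field_simp
    intro l w
    rw [e]
    fin_cases l <;> fin_cases w <;> simp <;> assumption
  have hS2 : ∀ l w, (D l)⁻¹ * (mS2 q l w * D w) ∈ O := by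
    have e : ∀ l w, (D l)⁻¹ * (mS2 q l w * D w) =
      !![0, 0, q * t * y 1, 0, 0, 0;
         0, 0, 0, 0, y 0 * t⁻¹, 0;
         (y 1)⁻¹ * t⁻¹, 0, q - 1, 0, 0, 0;
         0, 0, 0, 0, 0, q * t;
         0, q * t * (y 0)⁻¹, 0, 0, q - 1, 0;
         0, 0, 0, t⁻¹, 0, q - 1] l w := by
      intro l w
      fin_cases l <;> fin_cases w <;> simp [D, mS2] <;> field_simp
    intro l w
    rw [e]
    fin_cases l <;> fin_cases w <;> simp <;> assumption
  refine ⟨fun i => Units.mk0 (D i) (hD i), fun i l w => ?_⟩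
  simp only [Units.val_mk0]
  fin_cases i
  · exact hT l w
  · show (D l)⁻¹ * (((y 0 * y 1 * y 2)⁻¹ • (mT q q⁻¹ y * mT q q⁻¹ y)) l w * D w) ∈ O
    have : (D l)⁻¹ * (((y 0 * y 1 * y 2)⁻¹ • (mT q q⁻¹ y * mT q q⁻¹ y)) l w * D w) =
        (y 0 * y 1 * y 2)⁻¹ * ∑ k, ((D l)⁻¹ * (mT q q⁻¹ y l k * D k)) *
          ((D k)⁻¹ * (mT q q⁻¹ y k w * D w)) := by
      rw [Matrix.smul_apply, Matrix.mul_apply, smul_eq_mul, Finset.mul_sum, Finset.mul_sum,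
        Finset.sum_mul, Finset.mul_sum]
      refine Finset.sum_congr rfl fun k _ => ?_
      have := hD k
      field_simp
    rw [this]
    exact O.mul_mem c2 (O.sum_mem fun k _ => O.mul_mem (hT l k) (hT k w))
  · exact hS1 l w
  · exact hS2 l w

theorem exists_int (hu : ∀ i, YE p E f i * u i = 1 ∧ u i * YE p E f i = 1) (y : Fin 3 → Eˣ)
    (hy : IntCond p E f y) (hχ : ∀ i, yval p E f u χ i = (y i : E)) :
    ∃ L : Set (StdMod p E f u χ), IsIntegralStructure p E f u χ L := by
  have hy0 := (y 0).ne_zero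
  have hy1 := (y 1).ne_zero
  have hy2 := (y 2).ne_zero
  have hq := qE_ne p E f
  have hqm := qE_mem p E f
  obtain ⟨c1, c2, c3⟩ := hy
  obtain ⟨a1, a2, a3, a4⟩ := c3 0 1 (by decide)
  obtain ⟨-, -, a5, a6⟩ := c3 1 0 (by decide)
  simp only [Units.val_mul, Units.val_inv_eq_inv_val] at c1 c2 a1 a2 a3 a4 a5 a6
  obtain ⟨B, hB⟩ := std_basis p E f u χ hu (fun i => (y i : E)) hχ ((y 0 : E) * y 1 * y 2)⁻¹
    (inv_mul_cancel₀ (mul_ne_zero (mul_ne_zero hy0 hy1) hy2))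
  obtain ⟨t, ht, t1, t2, t3⟩ := oe_min p E (y 0 : E) (y 1 : E)⁻¹ hy0 (inv_ne_zero hy1)
  have ht0 : t ≠ 0 := by
    rcases ht with rfl | rfl | rfl
    · exact one_ne_zero
    · exact hy0
    · exact inv_ne_zero hy1
  have t4 : qE p E f * t ∈ OE p E := by
    rcases ht with rfl | rfl | rfl
    · rwa [mul_one]
    · exact a3
    · exact a6
  have t5 : qE p E f * t * (y 0 : E)⁻¹ ∈ OE p E := by
    rcases ht with rfl | rfl | rfl
    · rwa [mul_one]
    · rwa [mul_assoc, mul_inv_cancel₀ hy0, mul_one]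
    · rwa [mul_assoc, ← mul_inv, mul_comm (y 1 : E)]
  have t6 : qE p E f * t * (y 1 : E) ∈ OE p E := by
    rcases ht with rfl | rfl | rfl
    · rwa [mul_one]
    · rwa [mul_assoc]
    · rwa [mul_assoc, inv_mul_cancel₀ hy1, mul_one]
  obtain ⟨d, hd⟩ := conj_int (OE p E).toSubring (qE p E f) (fun i => (y i : E)) t hq hy0 hy1 hy2 ht0
    hqm c1 c2 t1 t2 t3 t4 t5 t6
  refine ⟨_, int_of_basis p E f u χ (B.unitsSMul d) (fun i l w => (d l : E)⁻¹ *
    (mG (qE p E f) (qE p E f)⁻¹ ((y 0 : E) * y 1 * y 2)⁻¹ (fun i => (y i : E)) i l w * d w))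
    ?_ hd⟩
  intro i w
  simp only [Module.Basis.unitsSMul_apply, Units.smul_def]
  rw [smul_comm, hB, Finset.smul_sum]
  refine Finset.sum_congr rfl fun l _ => ?_
  rw [smul_smul, smul_smul]
  congr 1
  have := (d l).ne_zero
  field_simp
end

end


theorem words_span {R : Type} [CommRing R] (q : R) (a : HeckeAlg R q) :
    ∃ (s : Finset (FreeMonoid (Fin 4))) (c : FreeMonoid (Fin 4) → R),
      a = ∑ w ∈ s, c w • FreeMonoid.lift (HeckeAlg.gen R q) w := by
  have h : a ∈ Submodule.span R (Set.range (FreeMonoid.lift (HeckeAlg.gen R q))) := by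
    induction a using HeckeAlg.ind with
    | halg c =>
      rw [Algebra.algebraMap_eq_smul_one]
      exact Submodule.smul_mem _ _ (Submodule.subset_span ⟨1, map_one _⟩)
    | hgen i => exact Submodule.subset_span ⟨FreeMonoid.of i, FreeMonoid.lift_eval_of _ _⟩
    | hadd a b ha hb => exact Submodule.add_mem _ ha hb
    | hmul a b ha hb =>
      have := Submodule.mul_mem_mul ha hb
      rw [Submodule.span_mul_span] at this
      refine Submodule.span_mono ?_ this
      rintro _ ⟨_, ⟨w, rfl⟩, _, ⟨w', rfl⟩, rfl⟩
      exact ⟨w * w', map_mul _ _ _⟩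
  rw [Finsupp.mem_span_range_iff_exists_finsupp] at h
  obtain ⟨c, hc⟩ := h
  exact ⟨c.support, c, hc.symm⟩

section
variable (p : ℕ) [Fact p.Prime] (E : Type) [Field E] [Algebra ℚ_[p] E]
  [FiniteDimensional ℚ_[p] E] [Algebra ℤ_[p] E] [IsScalarTower ℤ_[p] ℚ_[p] E] (f : ℕ)
  (u : Fin 3 → HE p E f) (χ : AE p E f u →ₐ[E] E)

open HeckeAlg

theorem basis_of_lattice (L : Set (StdMod p E f u χ)) (hL : IsIntegralStructure p E f u χ L)
    {n : ℕ} (b : Fin n → StdMod p E f u χ)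
    (hb : ∀ x ∈ L, ∃! c : Fin n → OE p E, x = ∑ i, ((c i : E) • b i)) :
    ∃ b' : Module.Basis (Fin n) E (StdMod p E f u χ), ∀ i, b' i = b i := by
  have hfr : IsFractionRing (OE p E) E :=
    integralClosure.isFractionRing_of_finite_extension ℚ_[p] E
  have hli : LinearIndependent (OE p E) b := by
    rw [Fintype.linearIndependent_iff]
    intro c hc i
    have h := (hb 0 hL.1).unique (y₁ := c) (y₂ := 0) hc.symm (by simp)
    rw [h]; rfl
  have hli' : LinearIndependent E b := (LinearIndependent.iff_fractionRing (OE p E) E).1 hli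
  obtain ⟨m, bE, hbE⟩ := hL.2.2.2.2.2
  have hsp : ⊤ ≤ Submodule.span E (Set.range b) := by
    rw [← bE.span_eq, Submodule.span_le]
    rintro _ ⟨i, rfl⟩
    obtain ⟨c, hc, -⟩ := hb _ (hbE i)
    rw [hc]
    exact Submodule.sum_mem _ fun j _ => Submodule.smul_mem _ _ (Submodule.subset_span ⟨j, rfl⟩)
  exact ⟨Module.Basis.mk hli' hsp, fun i => by simp⟩

theorem pi_sum (r : OE p E →+* Fbar p) (L : Set (StdMod p E f u χ))
    (hL : IsIntegralStructure p E f u χ L) (V : Type)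
    [AddCommGroup V] [Module (Fbar p) V] (π : StdMod p E f u χ → V)
    (h1 : ∀ x ∈ L, ∀ y ∈ L, π (x + y) = π x + π y)
    (h2 : ∀ (c : OE p E), ∀ x ∈ L, π ((c : E) • x) = r c • π x)
    {n : ℕ} (b : Fin n → StdMod p E f u χ) (hb : ∀ i, b i ∈ L) (c : Fin n → OE p E)
    (s : Finset (Fin n)) :
    (∑ i ∈ s, (c i : E) • b i) ∈ L ∧
      π (∑ i ∈ s, (c i : E) • b i) = ∑ i ∈ s, r (c i) • π (b i) := by
  induction s using Finset.induction_on with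
  | empty =>
    refine ⟨by simpa using hL.1, ?_⟩
    have := h2 0 0 hL.1
    simpa using this
  | insert a s ha ih =>
    rw [Finset.sum_insert ha, Finset.sum_insert ha]
    have hm := hL.2.2.1 (c a) _ (hb a)
    exact ⟨hL.2.1 _ hm _ ih.1, by rw [h1 _ hm _ ih.1, h2 _ _ (hb a), ih.2]⟩

theorem red_det (hu : ∀ i, YE p E f i * u i = 1 ∧ u i * YE p E f i = 1) (y : Fin 3 → E)
    (hy : ∀ i, yval p E f u χ i = y i) (ci : E) (hci : ci * (y 0 * y 1 * y 2) = 1)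
    (L : Set (StdMod p E f u χ)) (hL : IsIntegralStructure p E f u χ L)
    (r : OE p E →+* Fbar p) (V : Type) [AddCommGroup V] [Module (Fbar p) V]
    (π : StdMod p E f u χ → V) (hπ : IsReduction p E f u χ r L V π)
    (ρ : HF p →ₐ[Fbar p] Module.End (Fbar p) V)
    (hρ : ∀ (h : HPoly) (x : StdMod p E f u χ), x ∈ L →
              ρ (ιF p h) (π x) = π (ιE p E f h • x)) :
    FiniteDimensional (Fbar p) V ∧ ∀ s : Finset (FreeMonoid (Fin 4)),
      ∃ Q : MvPolynomial (FreeMonoid (Fin 4)) (OE p E),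
        MvPolynomial.map (algebraMap (OE p E) E) Q =
          detW (mG (MvPolynomial.C (qE p E f)) (MvPolynomial.C (qE p E f)⁻¹) (MvPolynomial.C ci)
            (fun i => MvPolynomial.C (y i))) s MvPolynomial.X ∧
        ∀ c : FreeMonoid (Fin 4) → Fbar p,
          (ρ (∑ w ∈ s, c w • FreeMonoid.lift (gen (Fbar p) 0) w)).det =
            MvPolynomial.eval₂ r c Q := by
  obtain ⟨h1, h2, n, b, hbL, hb, bV, hbV⟩ := hπ
  obtain ⟨b', hb'⟩ := basis_of_lattice p E f u χ L hL b hb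
  obtain ⟨B, hB⟩ := std_basis p E f u χ hu y hy ci hci
  have hn : n = 6 := by
    have e1 := Module.finrank_eq_card_basis b'
    rw [Module.finrank_eq_card_basis B] at e1
    simpa using e1.symm
  subst hn
  refine ⟨Module.Finite.of_basis bV, fun s => ?_⟩
  have hG : ∀ i w, ∃ c : Fin 6 → OE p E, gen E (qE p E f) i • b w = ∑ l, (c l : E) • b l := by
    intro i w
    have := hL.2.2.2.1 (gen _ _ i) _ (hbL w)
    rw [ιE_gen] at this
    exact (hb _ this).exists
  choose G' hG' using hG
  let G : Fin 4 → Matrix (Fin 6) (Fin 6) (OE p E) := fun i => Matrix.of fun l w => G' i w l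
  refine ⟨detW (fun i => MvPolynomial.C.mapMatrix (G i)) s MvPolynomial.X, ?_, ?_⟩
  · rw [detW_map]
    simp only [MvPolynomial.map_X]
    let act : Fin 4 → (StdMod p E f u χ →ₗ[E] StdMod p E f u χ) := fun i =>
      Module.toModuleEnd E (S := HE p E f) (StdMod p E f u χ) (gen E (qE p E f) i)
    have hact : ∀ i x, act i x = gen E (qE p E f) i • x := fun i x => rfl
    have m1 : ∀ i, LinearMap.toMatrix b' b' (act i) = (algebraMap (OE p E) E).mapMatrix (G i) := by
      intro i
      ext l w
      rw [LinearMap.toMatrix_apply, hact, hb', hG']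
      simp only [← hb']
      rw [b'.repr_sum_self]
      rfl
    have m2 : ∀ i, LinearMap.toMatrix B B (act i) =
        mG (qE p E f) (qE p E f)⁻¹ ci y i := by
      intro i
      ext l w
      rw [LinearMap.toMatrix_apply, hact, hB, B.repr_sum_self]
    have hP : ∀ i, B.toMatrix b' * LinearMap.toMatrix b' b' (act i) =
        LinearMap.toMatrix B B (act i) * B.toMatrix b' := by
      intro i
      rw [basis_toMatrix_mul_linearMap_toMatrix, linearMap_toMatrix_mul_basis_toMatrix]
    have hdet : (B.toMatrix b').det ≠ 0 := by
      have := congrArg Matrix.det (B.toMatrix_mul_toMatrix_flip b')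
      rw [Matrix.det_mul, Matrix.det_one] at this
      exact left_ne_zero_of_mul_eq_one this
    refine detW_conj _ _ (MvPolynomial.C.mapMatrix (B.toMatrix b')) ?_ ?_ s _
    · rw [← RingHom.map_det]
      simpa using hdet
    · intro i
      have h := congrArg (MvPolynomial.C (σ := FreeMonoid (Fin 4))).mapMatrix (hP i)
      rw [map_mul, map_mul, m1, m2, mG_map] at h
      rw [← h]
      congr 1
      ext l w : 2
      simp [MvPolynomial.map_C]
  · intro c
    have e := detW_map (MvPolynomial.eval₂Hom r c) (fun i => MvPolynomial.C.mapMatrix (G i)) s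
      MvPolynomial.X
    have e' : MvPolynomial.eval₂ r c (detW (fun i => MvPolynomial.C.mapMatrix (G i)) s
      MvPolynomial.X) = _ := e
    rw [e', ← LinearMap.det_toMatrix bV]
    simp only [MvPolynomial.eval₂Hom_X']
    unfold detW
    congr 1
    rw [map_sum, map_sum]
    refine Finset.sum_congr rfl fun w _ => ?_
    rw [map_smul, map_smul]
    congr 1
    let ψ : HF p →* Matrix (Fin 6) (Fin 6) (Fbar p) :=
      ((LinearMap.toMatrixAlgEquiv bV).toAlgHom.comp ρ : HF p →ₐ[Fbar p] _)
    have hψ : ψ.comp (FreeMonoid.lift (gen (Fbar p) 0)) = FreeMonoid.lift (fun i =>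
        (MvPolynomial.eval₂Hom r c).mapMatrix (MvPolynomial.C.mapMatrix (G i))) := by
      ext i l k
      simp only [MonoidHom.comp_apply, FreeMonoid.lift_eval_of, Function.comp_apply]
      show LinearMap.toMatrix bV bV (ρ (gen (Fbar p) 0 i)) l k = _
      rw [LinearMap.toMatrix_apply, ← ιF_gen, hbV, hρ _ _ (hbL k), ιE_gen, hG',
        (pi_sum p E f u χ r L hL V π h1 h2 b hbL _ _).2]
      simp only [← hbV]
      rw [bV.repr_sum_self]
      simp [G]
    exact DFunLike.congr_fun hψ w
end

set_option maxHeartbeats 1000000 in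
theorem statement7 (p : ℕ) [Fact p.Prime] (E : Type) [Field E] [Algebra ℚ_[p] E]
    [FiniteDimensional ℚ_[p] E] [Algebra ℤ_[p] E] [IsScalarTower ℤ_[p] ℚ_[p] E]
    (f : ℕ) (hf : 0 < f)
    (y : Fin 3 → Eˣ) (hy : IntCond p E f y) (σ : Equiv.Perm (Fin 3)) :
    IntCond p E f (y ∘ σ) ∧
    ∀ (u : Fin 3 → HE p E f) (hu : ∀ i, YE p E f i * u i = 1 ∧ u i * YE p E f i = 1)
      (χ χ' : AE p E f u →ₐ[E] E),
      (∀ i, yval p E f u χ i = (y i : E)) → (∀ i, yval p E f u χ' i = (y (σ i) : E)) →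
      (∃ L : Set (StdMod p E f u χ), IsIntegralStructure p E f u χ L) ∧
      (∃ L' : Set (StdMod p E f u χ'), IsIntegralStructure p E f u χ' L') ∧
      ∀ (L : Set (StdMod p E f u χ)) (L' : Set (StdMod p E f u χ')),
        IsIntegralStructure p E f u χ L → IsIntegralStructure p E f u χ' L' →
        ∀ (r : OE p E →+* Fbar p) (V V' : Type)
          [AddCommGroup V] [Module (Fbar p) V] [AddCommGroup V'] [Module (Fbar p) V']
          (π : StdMod p E f u χ → V) (π' : StdMod p E f u χ' → V'),
          IsReduction p E f u χ r L V π → IsReduction p E f u χ' r L' V' π' →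
          ∀ (ρ : HF p →ₐ[Fbar p] Module.End (Fbar p) V)
            (ρ' : HF p →ₐ[Fbar p] Module.End (Fbar p) V'),
            (∀ (h : HPoly) (x : StdMod p E f u χ), x ∈ L →
              ρ (ιF p h) (π x) = π (ιE p E f h • x)) →
            (∀ (h : HPoly) (x : StdMod p E f u χ'), x ∈ L' →
              ρ' (ιF p h) (π' x) = π' (ιE p E f h • x)) →
            SameJHFactors p ρ ρ' := by
  have hyσ := intCond_perm p E f y hy σ
  refine ⟨hyσ, ?_⟩
  intro u hu χ χ' hχ hχ'
  refine ⟨exists_int p E f u χ hu y hy hχ, exists_int p E f u χ' hu (y ∘ σ) hyσ hχ', ?_⟩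
  intro L L' hL hL' r V V' _ _ _ _ π π' hπ hπ' ρ ρ' hρ hρ'
  have hprod : ((y (σ 0) : E) * y (σ 1) * y (σ 2)) = (y 0 : E) * y 1 * y 2 := by
    have := Equiv.prod_comp σ (fun i => (y i : E))
    simpa [Fin.prod_univ_three] using this
  have hne : (y 0 : E) * y 1 * y 2 ≠ 0 :=
    mul_ne_zero (mul_ne_zero (y 0).ne_zero (y 1).ne_zero) (y 2).ne_zero
  obtain ⟨fd, h⟩ := red_det p E f u χ hu (fun i => (y i : E)) hχ ((y 0 : E) * y 1 * y 2)⁻¹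
    (inv_mul_cancel₀ hne) L hL r V π hπ ρ hρ
  obtain ⟨fd', h'⟩ := red_det p E f u χ' hu (fun i => (y (σ i) : E)) hχ'
    ((y 0 : E) * y 1 * y 2)⁻¹
    (by rw [hprod]; exact inv_mul_cancel₀ hne) L' hL' r V' π' hπ' ρ' hρ'
  refine same_jh p ρ ρ' fun a => ?_
  obtain ⟨s, c, rfl⟩ := words_span _ a
  obtain ⟨Q, hQ, hd⟩ := h s
  obtain ⟨Q', hQ', hd'⟩ := h' s
  have hqq : (MvPolynomial.C (σ := FreeMonoid (Fin 4)) (qE p E f)) *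
      MvPolynomial.C (qE p E f)⁻¹ = 1 := by
    rw [← MvPolynomial.C_mul, mul_inv_cancel₀ (qE_ne p E f), MvPolynomial.C_1]
  have hQQ : Q = Q' := by
    apply MvPolynomial.map_injective (algebraMap (OE p E) E) Subtype.val_injective
    rw [hQ, hQ']
    exact detW_perm _ _ _ hqq σ _ s _
  rw [hd, hd', hQQ]
end

section
/- Let O be a commutative ring, q ∈ O, z a unit of O, and a, a', b, b', c, c' ∈ O with aa' = bb' = cc' = q. On the free O-module O^6 with basis e_1, …, e_6 define O-linear endomorphisms T and S by: Te_1 = e_2, Te_2 = e_3, Te_3 = z e_1, Te_4 = e_5, Te_5 = e_6, Te_6 = z e_4, and Se_1 = a e_4, Se_2 = b e_6, Se_3 = (q-1)e_3 + c' e_5, Se_4 = a' e_1 + (q-1)e_4, Se_5 = c e_3, Se_6 = b' e_2 + (q-1)e_6. Then T is invertible, (S+1)(S-q) = 0, T^3 S = S T^3, and, setting S' = T^{-1} S T, one has S S' S = S' S S'. Consequently the assignments T ↦ T, S_1 ↦ S, S_2 ↦ S' make O^6 a left module over H_O. -/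
set_option maxHeartbeats 4000000 in
theorem statement8_aux (O : Type) [CommRing O] (q z y a a' b b' c c' : O) (hz : z * y = 1)
    (ha : a * a' = q) (hb : b * b' = q) (hc : c * c' = q)
    (M N A B : Matrix (Fin 6) (Fin 6) O)
    (hM : M = !![0, 0, z, 0, 0, 0;
         1, 0, 0, 0, 0, 0;
         0, 1, 0, 0, 0, 0;
         0, 0, 0, 0, 0, z;
         0, 0, 0, 1, 0, 0;
         0, 0, 0, 0, 1, 0])
    (hN : N = !![0, 1, 0, 0, 0, 0;
         0, 0, 1, 0, 0, 0;
         y, 0, 0, 0, 0, 0;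
         0, 0, 0, 0, 1, 0;
         0, 0, 0, 0, 0, 1;
         0, 0, 0, y, 0, 0])
    (hA : A = !![0, 0, 0,     a', 0, 0;
         0, 0, 0,     0,  0, b';
         0, 0, q - 1, 0,  c, 0;
         a, 0, 0,     q - 1, 0, 0;
         0, 0, c',    0,  0, 0;
         0, b, 0,     0,  0, q - 1])
    (hB : B = !![0, 0, 0, 0, b', 0;
         0, q - 1, 0, c, 0, 0;
         0, 0, 0, 0, 0, a';
         0, c', 0, 0, 0, 0;
         b, 0, 0, 0, q - 1, 0;
         0, 0, a, 0, 0, q - 1]) :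
    M * N = 1 ∧ N * M = 1 ∧ A * A = (q - 1) • A + q • 1 ∧ M * M * M = z • 1 ∧
    M * B = A * M ∧ A * B * A = B * A * B := by
  have hz' : y * z = 1 := by rw [mul_comm]; exact hz
  refine ⟨?_, ?_, ?_, ?_, ?_, ?_⟩
  · subst hM hN
    ext i j
    fin_cases i <;> fin_cases j <;> simp [Matrix.mul_apply, Fin.sum_univ_six, hz]
  · subst hM hN
    ext i j
    fin_cases i <;> fin_cases j <;> simp [Matrix.mul_apply, Fin.sum_univ_six, hz']
  · subst hA
    ext i j
    fin_cases i <;> fin_cases j <;> simp [Matrix.mul_apply, Fin.sum_univ_six] <;> grind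
  · subst hM
    ext i j
    fin_cases i <;> fin_cases j <;> simp [Matrix.mul_apply, Fin.sum_univ_six]
  · subst hM hA hB
    ext i j
    fin_cases i <;> fin_cases j <;> simp [Matrix.mul_apply, Fin.sum_univ_six, mul_comm]
  · subst hA hB
    ext i j
    fin_cases i <;> fin_cases j <;> simp [Matrix.mul_apply, Fin.sum_univ_six] <;> grind

/-- Let `O` be a commutative ring, `q ∈ O`, `z` a unit of `O`, and
`a, a', b, b', c, c' ∈ O` with `aa' = bb' = cc' = q`. On the free `O`-module `O^6` define
the endomorphisms `T` and `S` by the matrices of the statement. Then `T` is invertible,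
`(S+1)(S-q) = 0`, `T^3 S = S T^3`, and, setting `S' = T⁻¹ S T`, one has `S S' S = S' S S'`.
Consequently the assignments `T ↦ T`, `S_1 ↦ S`, `S_2 ↦ S'` make `O^6` a left module over
`H_O`. -/
theorem statement8 (O : Type) [CommRing O] (q z a a' b b' c c' : O) (hz : IsUnit z)
    (ha : a * a' = q) (hb : b * b' = q) (hc : c * c' = q) :
    let Tm : Module.End O (Fin 6 → O) := Matrix.mulVecLin
      !![0, 0, z, 0, 0, 0;
         1, 0, 0, 0, 0, 0;
         0, 1, 0, 0, 0, 0;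
         0, 0, 0, 0, 0, z;
         0, 0, 0, 1, 0, 0;
         0, 0, 0, 0, 1, 0]
    let Sm : Module.End O (Fin 6 → O) := Matrix.mulVecLin
      !![0, 0, 0,     a', 0, 0;
         0, 0, 0,     0,  0, b';
         0, 0, q - 1, 0,  c, 0;
         a, 0, 0,     q - 1, 0, 0;
         0, 0, c',    0,  0, 0;
         0, b, 0,     0,  0, q - 1]
    IsUnit Tm ∧
    (Sm + 1) * (Sm - algebraMap O (Module.End O (Fin 6 → O)) q) = 0 ∧
    Tm ^ 3 * Sm = Sm * Tm ^ 3 ∧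
    Sm * (Ring.inverse Tm * Sm * Tm) * Sm =
      (Ring.inverse Tm * Sm * Tm) * Sm * (Ring.inverse Tm * Sm * Tm) ∧
    ∃ ρ : HeckeAlg O q →ₐ[O] Module.End O (Fin 6 → O),
      ρ (HeckeAlg.T O q) = Tm ∧ ρ (HeckeAlg.S1 O q) = Sm ∧
      ρ (HeckeAlg.S2 O q) = Ring.inverse Tm * Sm * Tm := by
  intro Tm Sm
  obtain ⟨u, rfl⟩ := hz
  obtain ⟨h1, h2, h3, h4, h5, h6⟩ := statement8_aux O q u (↑u⁻¹) a a' b b' c c' (by simp)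
    ha hb hc _ _ _ _ rfl rfl rfl rfl
  set M : Matrix (Fin 6) (Fin 6) O := !![0, 0, (u : O), 0, 0, 0;
         1, 0, 0, 0, 0, 0;
         0, 1, 0, 0, 0, 0;
         0, 0, 0, 0, 0, (u : O);
         0, 0, 0, 1, 0, 0;
         0, 0, 0, 0, 1, 0] with hM
  generalize !![0, 1, 0, 0, 0, 0;
         0, 0, 1, 0, 0, 0;
         ((u⁻¹ : Oˣ) : O), 0, 0, 0, 0, 0;
         0, 0, 0, 0, 1, 0;
         0, 0, 0, 0, 0, 1;
         0, 0, 0, ((u⁻¹ : Oˣ) : O), 0, 0] = N at h1 h2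
  set A : Matrix (Fin 6) (Fin 6) O := !![0, 0, 0,     a', 0, 0;
         0, 0, 0,     0,  0, b';
         0, 0, q - 1, 0,  c, 0;
         a, 0, 0,     q - 1, 0, 0;
         0, 0, c',    0,  0, 0;
         0, b, 0,     0,  0, q - 1] with hA
  generalize !![0, 0, 0, 0, b', 0;
         0, q - 1, 0, c, 0, 0;
         0, 0, 0, 0, 0, a';
         0, c', 0, 0, 0, 0;
         b, 0, 0, 0, q - 1, 0;
         0, 0, a, 0, 0, q - 1] = B at h5 h6
  have hT : Tm = Matrix.toLinAlgEquiv' M := rfl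
  have hS : Sm = Matrix.toLinAlgEquiv' A := rfl
  clear_value Tm Sm
  clear_value M A
  set φ := (Matrix.toLinAlgEquiv' : Matrix (Fin 6) (Fin 6) O ≃ₐ[O] _) with hφ
  have k1 : Tm * φ N = 1 := by rw [hT, ← map_mul, h1, map_one]
  have k2 : φ N * Tm = 1 := by rw [hT, ← map_mul, h2, map_one]
  have hinv : Ring.inverse Tm = φ N := Ring.inverse_unit ⟨Tm, φ N, k1, k2⟩
  have k5 : Ring.inverse Tm * Sm * Tm = φ B := by
    rw [hinv, hS, hT, ← map_mul, ← map_mul, mul_assoc, ← h5, ← mul_assoc, h2, one_mul]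
  have kq : (Sm + 1) * (Sm - algebraMap O (Module.End O (Fin 6 → O)) q) = 0 := by
    have e : Sm * Sm = (q - 1) • Sm + q • 1 := by
      rw [hS, ← map_mul, h3, map_add, map_smul, map_smul, map_one]
    rw [Algebra.algebraMap_eq_smul_one, add_mul, mul_sub, e, one_mul, mul_smul_comm, mul_one]
    module
  have k3 : Tm ^ 3 * Sm = Sm * Tm ^ 3 := by
    have e : Tm ^ 3 = (u : O) • 1 := by
      rw [pow_succ, pow_two, hT, ← map_mul, ← map_mul, h4, map_smul, map_one]
    rw [e, smul_mul_assoc, mul_smul_comm, one_mul, mul_one]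
  have k6 : Sm * φ B * Sm = φ B * Sm * φ B := by
    rw [hS, ← map_mul, ← map_mul, ← map_mul, ← map_mul, h6]
  have k7 : Tm * φ B = Sm * Tm := by rw [hT, hS, ← map_mul, ← map_mul, h5]
  rw [k5]
  refine ⟨⟨⟨Tm, φ N, k1, k2⟩, rfl⟩, kq, k3, k6, ?_⟩
  refine ⟨RingQuot.liftAlgHom O ⟨FreeAlgebra.lift O ![Tm, φ N, Sm, φ B], ?_⟩, ?_, ?_, ?_⟩
  · intro x y hxy
    cases hxy with
    | TTinv => simpa using k1
    | TinvT => simpa using k2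
    | quad =>
      rw [map_mul, map_add, map_sub, AlgHom.commutes, map_one, map_zero, FreeAlgebra.lift_ι_apply]
      exact kq
    | T3S1 => simpa using k3
    | braid => simpa using k6
    | TS2 => simpa using k7
  · simp [HeckeAlg.T, HeckeAlg.gen]
  · simp [HeckeAlg.S1, HeckeAlg.gen]
  · simp [HeckeAlg.S2, HeckeAlg.gen]
end

section
/- For z, y ∈ k^×, the formulas defining L_6(z,y) satisfy the defining relations of H_k, so they endow the 6-dimensional k-vector space with an H_k-module structure, and the H_k-module L_6(z,y) is simple. -/
noncomputable section

variable (p : ℕ) [Fact p.Prime] (k : Type) [Field k] [IsAlgClosed k] [CharP k p]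

/-- `H_k = H ⊗_{ℤ[q]} k` with `q ↦ 0`. -/
abbrev Hk : Type := HeckeAlg k 0

/-- The action of `T` on a `1`-dimensional space: multiplication by `c`. -/
def Tmat1 (c : k) : Module.End k (Fin 1 → k) := Matrix.mulVecLin !![c]

/-- The action of `T` on the `2`-dimensional space with basis `w, Tw` where
`T(Tw) = -y²w - yTw`. -/
def Tmat2 (y : k) : Module.End k (Fin 2 → k) := Matrix.mulVecLin !![0, -y^2; 1, -y]

/-- The action of `T` on the `3`-dimensional space with basis `v, Tv, T²v` where
`T(T²v) = zv`. -/
def Tmat3 (z : k) : Module.End k (Fin 3 → k) := Matrix.mulVecLin !![0, 0, z; 1, 0, 0; 0, 1, 0]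

/-- The action of `T` on the `6`-dimensional space with basis `v, Tv, T²v, w, Tw, T²w`
where `T(T²v) = zv`, `T(T²w) = zw`. -/
def Tmat6 (z : k) : Module.End k (Fin 6 → k) := Matrix.mulVecLin
  !![0, 0, z, 0, 0, 0;
     1, 0, 0, 0, 0, 0;
     0, 1, 0, 0, 0, 0;
     0, 0, 0, 0, 0, z;
     0, 0, 0, 1, 0, 0;
     0, 0, 0, 0, 1, 0]

/-- The action of `S_1` on `L_6(z,y)`: `S_1v = 0`, `S_1(Tv) = T²w`, `S_1(T²v) = -T²v`,
`S_1w = -w`, `S_1(Tw) = (y/z)T²v`, `S_1(T²w) = -T²w`. -/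
def SL6 (z y : k) : Module.End k (Fin 6 → k) := Matrix.mulVecLin
  !![0, 0, 0,  0,  0,     0;
     0, 0, 0,  0,  0,     0;
     0, 0, -1, 0,  y / z, 0;
     0, 0, 0,  -1, 0,     0;
     0, 0, 0,  0,  0,     0;
     0, 1, 0,  0,  0,     -1]

/-- The action of `S_1` on `L̃_6(z,y)`: as on `L_6(z,y)` except `S_1v = w`, `S_1(Tv) = 0`. -/
def SLt6 (z y : k) : Module.End k (Fin 6 → k) := Matrix.mulVecLin
  !![0, 0, 0,  0,  0,     0;
     0, 0, 0,  0,  0,     0;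
     0, 0, -1, 0,  y / z, 0;
     1, 0, 0,  -1, 0,     0;
     0, 0, 0,  0,  0,     0;
     0, 0, 0,  0,  0,     -1]

/-- The action of `S_1` on `K_6(z,y,y')`: `S_1v = w`, `S_1(Tv) = (y/y')T²w`,
`S_1(T²v) = -T²v`, `S_1w = -w`, `S_1(Tw) = (y'/z)T²v`, `S_1(T²w) = -T²w`. -/
def SK6 (z y y' : k) : Module.End k (Fin 6 → k) := Matrix.mulVecLin
  !![0, 0,      0,  0,  0,      0;
     0, 0,      0,  0,  0,      0;
     0, 0,      -1, 0,  y' / z, 0;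
     1, 0,      0,  -1, 0,      0;
     0, 0,      0,  0,  0,      0;
     0, y / y', 0,  0,  0,      -1]

/-- The action of `S_1` on `M_3(z,y)`: `S_1v = 0`, `S_1(Tv) = y⁻¹T²v`, `S_1(T²v) = -T²v`. -/
def SM3 (y : k) : Module.End k (Fin 3 → k) := Matrix.mulVecLin
  !![0, 0, 0; 0, 0, 0; 0, y⁻¹, -1]

/-- The action of `S_1` on `M̃_3(z,y)`: `S_1v = -v`, `S_1(Tv) = -y⁻¹T²v`, `S_1(T²v) = -T²v`. -/
def SMt3 (y : k) : Module.End k (Fin 3 → k) := Matrix.mulVecLin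
  !![-1, 0, 0; 0, 0, 0; 0, -y⁻¹, -1]

/-- The action of `S_1` on `N_3(z,y)`: `S_1v = -v`, `S_1(Tv) = 0`, `S_1(T²v) = -yTv - T²v`. -/
def SN3 (y : k) : Module.End k (Fin 3 → k) := Matrix.mulVecLin
  !![-1, 0, 0; 0, 0, -y; 0, 0, -1]

/-- The action of `S_1` on `Ñ_3(z,y)`: `S_1v = 0`, `S_1(Tv) = 0`, `S_1(T²v) = yTv - T²v`. -/
def SNt3 (y : k) : Module.End k (Fin 3 → k) := Matrix.mulVecLin
  !![0, 0, 0; 0, 0, y; 0, 0, -1]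

/-- The action of `S_1` on `P_3(z)`: `S_1v = 0`, `S_1(Tv) = 0`, `S_1(T²v) = -T²v`. -/
def SP3 : Module.End k (Fin 3 → k) := Matrix.mulVecLin
  !![0, 0, 0; 0, 0, 0; 0, 0, -1]

/-- The action of `S_1` on `P̃_3(z)`: `S_1v = -v`, `S_1(Tv) = 0`, `S_1(T²v) = -T²v`. -/
def SPt3 : Module.End k (Fin 3 → k) := Matrix.mulVecLin
  !![-1, 0, 0; 0, 0, 0; 0, 0, -1]

/-- The action of `S_1` on `M_2(y)`: `S_1w = -w`, `S_1(Tw) = 0`. -/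
def SM2 : Module.End k (Fin 2 → k) := Matrix.mulVecLin !![-1, 0; 0, 0]

/-- The action of `S_1` on `M̃_2(y)`: `S_1w = 0`, `S_1(Tw) = -Tw`. -/
def SMt2 : Module.End k (Fin 2 → k) := Matrix.mulVecLin !![0, 0; 0, -1]

end

theorem L6_T_apply (k : Type) [Field k] (z : k) (x : Fin 6 → k) :
    Tmat6 k z x = ![z * x 2, x 0, x 1, z * x 5, x 3, x 4] := by
  ext i
  fin_cases i <;> simp [Tmat6, Matrix.mulVec, dotProduct, Fin.sum_univ_succ]

theorem L6_S_apply (k : Type) [Field k] (z y : k) (x : Fin 6 → k) :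
    SL6 k z y x = ![0, 0, -x 2 + y / z * x 4, -x 3, 0, x 1 - x 5] := by
  ext i
  fin_cases i <;> simp [SL6, Matrix.mulVec, dotProduct, Fin.sum_univ_succ, sub_eq_add_neg]

/-- The inverse of `T` on `L_6(z,y)`. -/
noncomputable def L6Tinv (k : Type) [Field k] (z : k) : Module.End k (Fin 6 → k) where
  toFun x := ![x 1, x 2, z⁻¹ * x 0, x 4, x 5, z⁻¹ * x 3]
  map_add' a b := by ext i; fin_cases i <;> simp [mul_add]
  map_smul' c a := by ext i; fin_cases i <;> simp <;> ring

theorem L6_Tinv_apply (k : Type) [Field k] (z : k) (x : Fin 6 → k) :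
    L6Tinv k z x = ![x 1, x 2, z⁻¹ * x 0, x 4, x 5, z⁻¹ * x 3] := rfl

/-- The images of the four generators. -/
noncomputable def L6gen (k : Type) [Field k] (z y : k) : Fin 4 → Module.End k (Fin 6 → k) :=
  ![Tmat6 k z, L6Tinv k z, SL6 k z y, L6Tinv k z * SL6 k z y * Tmat6 k z]

theorem L6_rel (k : Type) [Field k] (z y : k) (hz : z ≠ 0)
    (a b : FreeAlgebra k (Fin 4)) (h : HeckeRel k 0 a b) :
    FreeAlgebra.lift k (L6gen k z y) a = FreeAlgebra.lift k (L6gen k z y) b := by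
  cases h <;> refine LinearMap.ext fun x => funext fun i => ?_ <;>
    simp [L6gen, pow_succ, L6_T_apply, L6_S_apply, L6_Tinv_apply] <;>
    fin_cases i <;> simp [hz] <;> field_simp <;> ring

theorem L6_simple (k : Type) [Field k] (z y : k) (hz : z ≠ 0) (hy : y ≠ 0)
    (W : Submodule k (Fin 6 → k)) (hT : ∀ x ∈ W, Tmat6 k z x ∈ W)
    (hS : ∀ x ∈ W, SL6 k z y x ∈ W) (hTi : ∀ x ∈ W, L6Tinv k z x ∈ W) : W = ⊥ ∨ W = ⊤ := by
  by_cases hphi : ∀ x ∈ W, x 1 - y / z * x 3 - x 5 = 0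
  · left
    have h1 : ∀ x ∈ W, x 1 = x 5 := by
      intro x hx
      have := hphi _ (hT _ (hS x hx))
      simp [L6_T_apply, L6_S_apply, hz, hy] at this
      grind
    have h3 : ∀ x ∈ W, x 3 = 0 := by
      intro x hx
      have a := hphi x hx
      rw [h1 x hx] at a
      simpa [hz, hy] using a
    have h5 : ∀ x ∈ W, x 5 = 0 := by
      intro x hx
      simpa [L6_T_apply, hz] using h3 _ (hT x hx)
    have h4 : ∀ x ∈ W, x 4 = 0 := by
      intro x hx
      simpa [L6_T_apply, hz] using h5 _ (hT x hx)
    have h0 : ∀ x ∈ W, x 0 = 0 := by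
      intro x hx
      have := h1 _ (hT x hx)
      simp [L6_T_apply] at this
      rw [this, h4 x hx]
    have h2 : ∀ x ∈ W, x 2 = 0 := by
      intro x hx
      simpa [L6_T_apply, hz] using h0 _ (hT x hx)
    rw [eq_bot_iff]
    intro x hx
    rw [Submodule.mem_bot]
    ext i
    fin_cases i
    · exact h0 x hx
    · exact (h1 x hx).trans (h5 x hx)
    · exact h2 x hx
    · exact h3 x hx
    · exact h4 x hx
    · exact h5 x hx
  · right
    push Not at hphi
    obtain ⟨x, hx, hne⟩ := hphi
    have e5 : (![0, 0, 0, 0, 0, 1] : Fin 6 → k) ∈ W := by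
      have := W.smul_mem (x 1 - y / z * x 3 - x 5)⁻¹
        (hS _ (hTi _ (hS _ (hT _ (hS x hx)))))
      convert this using 1
      ext i
      fin_cases i <;> simp [L6_T_apply, L6_S_apply, L6_Tinv_apply, hz]
      field_simp at hne ⊢
      grind
    have e4 : (![0, 0, 0, 0, 1, 0] : Fin 6 → k) ∈ W := by
      simpa [L6_Tinv_apply] using hTi _ e5
    have e3 : (![0, 0, 0, 1, 0, 0] : Fin 6 → k) ∈ W := by
      simpa [L6_Tinv_apply] using hTi _ e4
    have e2 : (![0, 0, 1, 0, 0, 0] : Fin 6 → k) ∈ W := by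
      have := W.smul_mem (z / y) (hS _ e4)
      simpa [L6_S_apply, hz, hy] using this
    have e1 : (![0, 1, 0, 0, 0, 0] : Fin 6 → k) ∈ W := by
      simpa [L6_Tinv_apply] using hTi _ e2
    have e0 : (![1, 0, 0, 0, 0, 0] : Fin 6 → k) ∈ W := by
      simpa [L6_Tinv_apply] using hTi _ e1
    rw [eq_top_iff]
    intro u _
    have := W.add_mem (W.smul_mem (u 0) e0) (W.add_mem (W.smul_mem (u 1) e1)
      (W.add_mem (W.smul_mem (u 2) e2) (W.add_mem (W.smul_mem (u 3) e3)
      (W.add_mem (W.smul_mem (u 4) e4) (W.smul_mem (u 5) e5)))))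
    convert this using 1
    ext i
    fin_cases i <;> simp


/-- For `z, y ∈ k^×`, the formulas defining `L_6(z,y)` satisfy the defining relations of `H_k`, so they endow the `6`-dimensional `k`-vector space with an `H_k`-module structure, and the `H_k`-module `L_6(z,y)` is simple. -/
theorem statement9 (p : ℕ) [Fact p.Prime] (k : Type) [Field k] [IsAlgClosed k] [CharP k p]
    (z y : kˣ) :
    ∃ ρ : Hk k →ₐ[k] Module.End k (Fin 6 → k),
      ρ (HeckeAlg.T k 0) = Tmat6 k z ∧ ρ (HeckeAlg.S1 k 0) = SL6 k z y ∧
      (∀ W : Submodule k (Fin 6 → k), (∀ a : Hk k, ∀ x ∈ W, ρ a x ∈ W) → W = ⊥ ∨ W = ⊤) := by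
  have hz : (z : k) ≠ 0 := z.ne_zero
  have hy : (y : k) ≠ 0 := y.ne_zero
  let ρ : Hk k →ₐ[k] Module.End k (Fin 6 → k) :=
    RingQuot.liftAlgHom k ⟨FreeAlgebra.lift k (L6gen k z y), fun a b h => L6_rel k z y hz a b h⟩
  have hgen : ∀ i, ρ (HeckeAlg.gen k 0 i) = L6gen k z y i := by
    intro i
    simp [ρ, HeckeAlg.gen]
  have hT : ρ (HeckeAlg.T k 0) = Tmat6 k z := hgen 0
  have hTi : ρ (HeckeAlg.Tinv k 0) = L6Tinv k z := hgen 1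
  have hS : ρ (HeckeAlg.S1 k 0) = SL6 k z y := hgen 2
  refine ⟨ρ, hT, hS, fun W hW => L6_simple k z y hz hy W ?_ ?_ ?_⟩
  · intro x hx
    rw [← hT]
    exact hW _ x hx
  · intro x hx
    rw [← hS]
    exact hW _ x hx
  · intro x hx
    rw [← hTi]
    exact hW _ x hx
end

section
/- For z, y, y' ∈ k^×, the formulas defining K_6(z,y,y') endow the 6-dimensional k-vector space with an H_k-module structure, and the H_k-module K_6(z,y,y') is simple if and only if y^2 ≠ y' and y'^2 ≠ zy. -/
section K6Helpers

variable {k : Type} [Field k]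

theorem K6_T_apply (z : k) (x : Fin 6 → k) :
    Tmat6 k z x = ![z * x 2, x 0, x 1, z * x 5, x 3, x 4] := by
  ext i
  fin_cases i <;> simp [Tmat6, Matrix.mulVec, dotProduct, Fin.sum_univ_succ]

theorem K6_S_apply (z y y' : k) (x : Fin 6 → k) :
    SK6 k z y y' x = ![0, 0, -x 2 + y' / z * x 4, x 0 - x 3, 0, y / y' * x 1 - x 5] := by
  ext i
  fin_cases i <;> simp [SK6, Matrix.mulVec, dotProduct, Fin.sum_univ_succ] <;>
    ring

/-- The inverse of the action of `T`. -/
noncomputable def K6Tinv (z : k) : Module.End k (Fin 6 → k) := z⁻¹ • (Tmat6 k z * Tmat6 k z)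

theorem K6_Tinv_apply (z : k) (hz : z ≠ 0) (x : Fin 6 → k) :
    K6Tinv z x = ![x 1, x 2, z⁻¹ * x 0, x 4, x 5, z⁻¹ * x 3] := by
  ext i
  fin_cases i <;> simp [K6Tinv, K6_T_apply, hz]

/-- The action of the four generators. -/
noncomputable def K6gen (z y y' : k) : Fin 4 → Module.End k (Fin 6 → k) :=
  ![Tmat6 k z, K6Tinv z, SK6 k z y y', K6Tinv z * SK6 k z y y' * Tmat6 k z]

theorem K6_rel (z y y' : k) (hz : z ≠ 0) (hy : y ≠ 0) (hy' : y' ≠ 0)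
    (a b : FreeAlgebra k (Fin 4)) (h : HeckeRel k 0 a b) :
    FreeAlgebra.lift k (K6gen z y y') a = FreeAlgebra.lift k (K6gen z y y') b := by
  cases h <;> simp only [map_mul, map_add, map_sub, map_one, map_zero, map_pow,
      FreeAlgebra.lift_ι_apply] <;>
    refine LinearMap.ext fun x => ?_ <;> ext i <;> fin_cases i <;>
    simp [K6gen, K6_T_apply, K6_S_apply, K6_Tinv_apply, hz, pow_succ] <;>
    (try field_simp) <;> (try ring)

/-- The representation `K_6(z,y,y')`. -/
noncomputable def K6rho (z y y' : k) (hz : z ≠ 0) (hy : y ≠ 0) (hy' : y' ≠ 0) :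
    Hk k →ₐ[k] Module.End k (Fin 6 → k) :=
  RingQuot.liftAlgHom k ⟨FreeAlgebra.lift k (K6gen z y y'),
    fun {a b} h => K6_rel z y y' hz hy hy' a b h⟩

theorem K6rho_gen (z y y' : k) (hz : z ≠ 0) (hy : y ≠ 0) (hy' : y' ≠ 0) (i : Fin 4) :
    K6rho z y y' hz hy hy' (HeckeAlg.gen k 0 i) = K6gen z y y' i := by
  simp [K6rho, HeckeAlg.gen, RingQuot.liftAlgHom_mkAlgHom_apply]

theorem K6rho_stable (z y y' : k) (hz : z ≠ 0) (hy : y ≠ 0) (hy' : y' ≠ 0)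
    (W : Submodule k (Fin 6 → k)) (hT : ∀ x ∈ W, Tmat6 k z x ∈ W)
    (hS : ∀ x ∈ W, SK6 k z y y' x ∈ W) (a : Hk k) :
    ∀ x ∈ W, K6rho z y y' hz hy hy' a x ∈ W := by
  obtain ⟨b, rfl⟩ := RingQuot.mkAlgHom_surjective k (HeckeRel k 0) a
  have hTi : ∀ x ∈ W, K6Tinv z x ∈ W := fun x hx =>
    W.smul_mem _ (hT _ (hT _ hx))
  induction b using FreeAlgebra.induction with
  | grade0 r =>
    intro x hx
    rw [AlgHom.commutes, AlgHom.commutes]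
    exact W.smul_mem r hx
  | grade1 i =>
    intro x hx
    have := K6rho_gen z y y' hz hy hy' i
    rw [HeckeAlg.gen] at this
    rw [this]
    fin_cases i
    · exact hT x hx
    · exact hTi x hx
    · exact hS x hx
    · exact hTi _ (hS _ (hT x hx))
  | mul a b ha hb =>
    intro x hx
    rw [map_mul, map_mul]
    exact ha _ (hb x hx)
  | add a b ha hb =>
    intro x hx
    rw [map_add, map_add]
    exact W.add_mem (ha x hx) (hb x hx)

/-- The proper submodule when `y² = y'`. -/
def K6W1 (z y : k) : Submodule k (Fin 6 → k) where
  carrier := {x | x 0 = y * x 4 ∧ x 1 = y * x 5 ∧ z * x 2 = y * x 3}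
  zero_mem' := by simp
  add_mem' := by
    rintro a b ⟨h1, h2, h3⟩ ⟨h4, h5, h6⟩
    refine ⟨?_, ?_, ?_⟩ <;> simp only [Pi.add_apply]
    · rw [h1, h4]; ring
    · rw [h2, h5]; ring
    · rw [mul_add, h3, h6]; ring
  smul_mem' := by
    rintro c a ⟨h1, h2, h3⟩
    refine ⟨?_, ?_, ?_⟩ <;> simp only [Pi.smul_apply, smul_eq_mul]
    · rw [h1]; ring
    · rw [h2]; ring
    · linear_combination c * h3

/-- The proper submodule when `y'² = zy`. -/
def K6W2 : Submodule k (Fin 6 → k) where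
  carrier := {x | x 0 = x 3 ∧ x 1 = x 4 ∧ x 2 = x 5}
  zero_mem' := by simp
  add_mem' := by
    rintro a b ⟨h1, h2, h3⟩ ⟨h4, h5, h6⟩
    refine ⟨?_, ?_, ?_⟩ <;> simp only [Pi.add_apply]
    · rw [h1, h4]
    · rw [h2, h5]
    · rw [h3, h6]
  smul_mem' := by
    rintro c a ⟨h1, h2, h3⟩
    refine ⟨?_, ?_, ?_⟩ <;> simp only [Pi.smul_apply, smul_eq_mul]
    · rw [h1]
    · rw [h2]
    · rw [h3]

/-- General vector in the image of `S_1`. -/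
def K6u (a b c : k) : Fin 6 → k := ![0, 0, a, b, 0, c]

theorem K6_simple (z y y' : k) (hz : z ≠ 0) (hy : y ≠ 0) (hy' : y' ≠ 0)
    (h1 : y ^ 2 ≠ y') (h2 : y' ^ 2 ≠ z * y)
    (W : Submodule k (Fin 6 → k)) (hT : ∀ x ∈ W, Tmat6 k z x ∈ W)
    (hS : ∀ x ∈ W, SK6 k z y y' x ∈ W) : W = ⊥ ∨ W = ⊤ := by
  have hA : ∀ a b c : k, K6u a b c ∈ W → K6u (y' / z * b) (z * (a - c)) 0 ∈ W := by
    intro a b c h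
    convert hS _ (hT _ h) using 1
    ext i
    fin_cases i <;> simp [K6u, K6_T_apply, K6_S_apply, mul_sub]
  have hB : ∀ a b c : k, K6u a b c ∈ W → K6u (y' * c) 0 (z * y / y' * a - b) ∈ W := by
    intro a b c h
    convert hS _ (hT _ (hT _ h)) using 1
    ext i
    fin_cases i <;> simp [K6u, K6_T_apply, K6_S_apply] <;> field_simp
  have hL : ∀ r s a b c a' b' c' : k, K6u a b c ∈ W → K6u a' b' c' ∈ W →
      K6u (r * a + s * a') (r * b + s * b') (r * c + s * c') ∈ W := by
    intro r s a b c a' b' c' h h'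
    convert W.add_mem (W.smul_mem r h) (W.smul_mem s h') using 1
    ext i
    fin_cases i <;> simp [K6u]
  -- containing `T²v` means everything
  have hTop : ∀ a : k, a ≠ 0 → K6u a 0 0 ∈ W → W = ⊤ := by
    intro a ha h
    have e2 : K6u (1 : k) 0 0 ∈ W := by
      have := hL a⁻¹ 0 _ _ _ _ _ _ h h
      simpa [ha] using this
    have e3 : K6u (0 : k) z 0 ∈ W := by simpa using hA _ _ _ e2
    rw [eq_top_iff]
    intro x _
    have e0 := hT _ e2
    have e1 := hT _ e0
    have e4 := hT _ e3
    have e5 := hT _ e4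
    have := W.add_mem (W.add_mem (W.add_mem (W.smul_mem (x 2) e2) (W.smul_mem (z⁻¹ * x 0) e0))
      (W.add_mem (W.smul_mem (z⁻¹ * x 1) e1) (W.smul_mem (z⁻¹ * x 3) e3)))
      (W.add_mem (W.smul_mem (z⁻¹ * x 4) e4) (W.smul_mem (z⁻¹ * x 5) e5))
    convert this using 1
    ext i
    fin_cases i <;> simp [K6u, K6_T_apply] <;> field_simp
  have hab : ∀ a b : k, (a ≠ 0 ∨ b ≠ 0) → K6u a b 0 ∈ W → W = ⊤ := by
    intro a b hne h
    by_cases hq : z * y * a - y' * b = 0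
    · have ha : a ≠ 0 := by
        rintro rfl
        have : b = 0 := by simpa [hy'] using hq
        simp_all
      have h3 := hL z (-(z * (z * y / y'))) _ _ _ _ _ _ (hA _ _ _ h) h
      have hbv : b = z * y / y' * a := by field_simp; linear_combination -hq
      have h4 := hL (z * a) (-b) _ _ _ _ _ _ (h) (hA _ _ _ h)
      refine hTop _ ?_ (by convert h4 using 2 <;> ring)
      rw [hbv]
      have : z * a * a + -(z * y / y' * a) * (y' / z * (z * y / y' * a))
          = z * a ^ 2 * (y' - y ^ 2) / y' := by field_simp; ring
      rw [this]
      exact div_ne_zero (mul_ne_zero (mul_ne_zero hz (pow_ne_zero 2 ha))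
        (sub_ne_zero.2 h1.symm)) hy'
    · refine hTop _ hq ?_
      convert hB _ _ _ (hB _ _ _ h) using 2 <;> field_simp
      simp
  have hac : ∀ a : k, a ≠ 0 → K6u a 0 a ∈ W → W = ⊤ := by
    intro a ha h
    have h3 := hL (z * y) (-y') _ _ _ _ _ _ h (hB _ _ _ h)
    refine hTop (a * (z * y - y' ^ 2))
      (mul_ne_zero ha (sub_ne_zero.2 h2.symm)) ?_
    convert h3 using 2
    · ring
    · ring
    · field_simp; ring
  have hu : ∀ a b c : k, (a ≠ 0 ∨ b ≠ 0 ∨ c ≠ 0) → K6u a b c ∈ W → W = ⊤ := by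
    intro a b c hne h
    by_cases hc : b = 0 ∧ a - c = 0
    · obtain ⟨rfl, hc⟩ := hc
      obtain rfl := sub_eq_zero.1 hc
      exact hac a (by tauto) h
    · refine hab _ _ ?_ (hA _ _ _ h)
      by_contra! hcon
      simp only [mul_eq_zero, div_eq_zero_iff, hz, hy', false_or, or_self] at hcon
      exact hc hcon
  by_cases hW : W = ⊤
  · exact Or.inr hW
  left
  rw [eq_bot_iff]
  intro x hx
  have key : ∀ x ∈ W, x 0 = x 3 ∧ x 2 = y' / z * x 4 ∧ x 5 = y / y' * x 1 := by
    intro x hx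
    by_contra hcon
    refine hW (hu (-x 2 + y' / z * x 4) (x 0 - x 3) (y / y' * x 1 - x 5) ?_ ?_)
    · by_contra! hc
      exact hcon ⟨sub_eq_zero.1 hc.2.1, by linear_combination -hc.1,
        by linear_combination -hc.2.2⟩
    · have := hS x hx
      rwa [K6_S_apply] at this
  obtain ⟨a1, a2, a3⟩ := key x hx
  obtain ⟨b1, b2, b3⟩ := key _ (hT _ hx)
  obtain ⟨c1, c2, c3⟩ := key _ (hT _ (hT _ hx))
  simp [K6_T_apply, hz] at b1 b2 b3 c1 c2 c3
  have x0 : x 0 = 0 := by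
    have e1 : y' * x 1 = y * x 0 := by rw [c1, b3]; field_simp
    have e2 : z * x 1 = y' * x 0 := by rw [b2, a1]; field_simp
    have : (y' ^ 2 - z * y) * x 0 = 0 := by linear_combination z * e1 - y' * e2
    exact (mul_eq_zero.1 this).resolve_left (sub_ne_zero.2 h2)
  have x3 : x 3 = 0 := by rw [← a1, x0]
  have x1 : x 1 = 0 := by rw [b2, x3]; simp
  have x4 : x 4 = 0 := by rw [← c1, x1]
  have x2 : x 2 = 0 := by rw [a2, x4]; simp
  have x5 : x 5 = 0 := by rw [← b1, x2]
  rw [Submodule.mem_bot]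
  ext i
  fin_cases i <;> simp [x0, x1, x2, x3, x4, x5]

end K6Helpers

/-- For `z, y, y' ∈ k^×`, the formulas defining `K_6(z,y,y')` endow the `6`-dimensional `k`-vector space with an `H_k`-module structure, and the `H_k`-module `K_6(z,y,y')` is simple if and only if `y² ≠ y'` and `y'² ≠ zy`. -/
theorem statement11 (p : ℕ) [Fact p.Prime] (k : Type) [Field k] [IsAlgClosed k] [CharP k p]
    (z y y' : kˣ) :
    ∃ ρ : Hk k →ₐ[k] Module.End k (Fin 6 → k),
      ρ (HeckeAlg.T k 0) = Tmat6 k z ∧ ρ (HeckeAlg.S1 k 0) = SK6 k z y y' ∧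
      ((∀ W : Submodule k (Fin 6 → k), (∀ a : Hk k, ∀ x ∈ W, ρ a x ∈ W) → W = ⊥ ∨ W = ⊤) ↔ ((y : k) ^ 2 ≠ (y' : k) ∧ (y' : k) ^ 2 ≠ (z : k) * (y : k))) := by
  have hz := z.ne_zero
  have hy := y.ne_zero
  have hy' := y'.ne_zero
  have hT := K6rho_gen (z : k) y y' hz hy hy' 0
  have hS := K6rho_gen (z : k) y y' hz hy hy' 2
  change K6rho (z : k) y y' hz hy hy' (HeckeAlg.T k 0) = Tmat6 k z at hT
  change K6rho (z : k) y y' hz hy hy' (HeckeAlg.S1 k 0) = SK6 k z y y' at hS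
  refine ⟨K6rho (z : k) y y' hz hy hy', hT, hS, ?_, ?_⟩
  · intro h
    constructor
    · intro hc
      have hor : (K6W1 (z : k) y) = (⊥ : Submodule k (Fin 6 → k)) ∨ (K6W1 (z : k) y) = (⊤ : Submodule k (Fin 6 → k)) := by
        refine h _ (K6rho_stable _ _ _ hz hy hy' _ ?_ ?_)
        · rintro x ⟨x1, x2, x3⟩
          rw [K6_T_apply]
          refine ⟨?_, ?_, ?_⟩ <;> simp [x1, x2, x3] <;> ring
        · rintro x ⟨x1, x2, x3⟩
          rw [K6_S_apply]
          refine ⟨?_, ?_, ?_⟩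
          · simp
          · simp [x2, ← hc]; field_simp; simp
          · simp [x1, ← hc]; field_simp; linear_combination -x3
      rcases hor with hW | hW
      · have : (![(y : k), 0, 0, 0, 1, 0] : Fin 6 → k) ∈ K6W1 (z : k) y := by
          refine ⟨?_, ?_, ?_⟩ <;> simp
        rw [hW, Submodule.mem_bot] at this
        simpa using congrFun this 4
      · have : (![1, 0, 0, 0, 0, 0] : Fin 6 → k) ∈ K6W1 (z : k) y := by simp [hW]
        simpa using this.1
    · intro hc
      have hor : K6W2 = (⊥ : Submodule k (Fin 6 → k)) ∨ K6W2 = (⊤ : Submodule k (Fin 6 → k)) := by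
        refine h _ (K6rho_stable _ _ _ hz hy hy' _ ?_ ?_)
        · rintro x ⟨x1, x2, x3⟩
          rw [K6_T_apply]
          refine ⟨?_, ?_, ?_⟩ <;> simp [x1, x2, x3]
        · rintro x ⟨x1, x2, x3⟩
          rw [K6_S_apply]
          refine ⟨?_, ?_, ?_⟩
          · simp [x1]
          · simp
          · simp [x2, x3]; field_simp; linear_combination (x 4) * hc
      rcases hor with hW | hW
      · have : (![1, 0, 0, 1, 0, 0] : Fin 6 → k) ∈ (K6W2 : Submodule k (Fin 6 → k)) := by
          refine ⟨?_, ?_, ?_⟩ <;> simp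
        rw [hW, Submodule.mem_bot] at this
        simpa using congrFun this 0
      · have : (![1, 0, 0, 0, 0, 0] : Fin 6 → k) ∈ (K6W2 : Submodule k (Fin 6 → k)) := by
          simp [hW]
        simpa using this.1
  · rintro ⟨h1, h2⟩ W hW
    refine K6_simple (z : k) y y' hz hy hy' h1 h2 W ?_ ?_
    · intro x hx
      rw [← hT]
      exact hW _ x hx
    · intro x hx
      rw [← hS]
      exact hW _ x hx
end

section
/- For z, y ∈ k^×, the formulas defining M_3(z,y) endow the 3-dimensional k-vector space with an H_k-module structure, and the H_k-module M_3(z,y) is simple if and only if y^3 ≠ z. -/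
noncomputable def m3gens (k : Type) [Field k] (z y : k) : Fin 4 → Module.End k (Fin 3 → k) :=
  ![Tmat3 k z, Matrix.mulVecLin !![0, 1, 0; 0, 0, 1; z⁻¹, 0, 0], SM3 k y,
    Matrix.mulVecLin !![0, 0, 0; y⁻¹, -1, 0; 0, 0, 0]]

theorem Tmat3_apply (k : Type) [Field k] (z : k) (x : Fin 3 → k) :
    Tmat3 k z x = ![z * x 2, x 0, x 1] := by
  ext i
  fin_cases i <;> simp [Tmat3, Matrix.mulVec, dotProduct, Fin.sum_univ_three]

theorem SM3_apply (k : Type) [Field k] (y : k) (x : Fin 3 → k) :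
    SM3 k y x = ![0, 0, y⁻¹ * x 1 - x 2] := by
  ext i
  fin_cases i <;> simp [SM3, Matrix.mulVec, dotProduct, Fin.sum_univ_three, sub_eq_add_neg]

theorem m3Tinv_apply (k : Type) [Field k] (z : k) (x : Fin 3 → k) :
    Matrix.mulVecLin !![0, 1, 0; 0, 0, 1; z⁻¹, 0, 0] x = ![x 1, x 2, z⁻¹ * x 0] := by
  ext i
  fin_cases i <;> simp [Matrix.mulVec, dotProduct, Fin.sum_univ_three]

theorem m3S2_apply (k : Type) [Field k] (y : k) (x : Fin 3 → k) :
    Matrix.mulVecLin !![0, 0, 0; y⁻¹, -1, 0; 0, 0, 0] x = ![0, y⁻¹ * x 0 - x 1, 0] := by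
  ext i
  fin_cases i <;> simp [Matrix.mulVec, dotProduct, Fin.sum_univ_three, sub_eq_add_neg]

theorem m3gens_rel (k : Type) [Field k] (z y : k) (hz : z ≠ 0) :
    ∀ ⦃a b : FreeAlgebra k (Fin 4)⦄, HeckeRel k 0 a b →
      FreeAlgebra.lift k (m3gens k z y) a = FreeAlgebra.lift k (m3gens k z y) b := by
  intro a b h
  cases h <;> refine LinearMap.ext fun x => ?_ <;>
    simp only [map_mul, map_add, map_sub, map_one, map_zero, map_pow, sub_zero, pow_succ, pow_zero,
      one_mul, FreeAlgebra.lift_ι_apply, m3gens, Matrix.cons_val, Module.End.mul_apply,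
      Module.End.one_apply, LinearMap.add_apply, LinearMap.zero_apply,
      Tmat3_apply, SM3_apply, m3Tinv_apply, m3S2_apply] <;>
    ext i <;> fin_cases i <;> simp [hz] <;> try ring

/-- For `z, y ∈ k^×`, the formulas defining `M_3(z,y)` endow the `3`-dimensional `k`-vector space with an `H_k`-module structure, and the `H_k`-module `M_3(z,y)` is simple if and only if `y³ ≠ z`. -/
theorem statement12 (p : ℕ) [Fact p.Prime] (k : Type) [Field k] [IsAlgClosed k] [CharP k p]
    (z y : kˣ) :
    ∃ ρ : Hk k →ₐ[k] Module.End k (Fin 3 → k),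
      ρ (HeckeAlg.T k 0) = Tmat3 k z ∧ ρ (HeckeAlg.S1 k 0) = SM3 k y ∧
      ((∀ W : Submodule k (Fin 3 → k), (∀ a : Hk k, ∀ x ∈ W, ρ a x ∈ W) → W = ⊥ ∨ W = ⊤) ↔ ((y : k) ^ 3 ≠ (z : k))) := by
  have hz : (z : k) ≠ 0 := z.ne_zero
  have hy : (y : k) ≠ 0 := y.ne_zero
  let ρ : Hk k →ₐ[k] Module.End k (Fin 3 → k) :=
    RingQuot.liftAlgHom k ⟨FreeAlgebra.lift k (m3gens k z y), m3gens_rel k z y hz⟩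
  have hρ : ∀ a, ρ (RingQuot.mkAlgHom k (HeckeRel k 0) a) =
      FreeAlgebra.lift k (m3gens k z y) a := fun a => RingQuot.liftAlgHom_mkAlgHom_apply ..
  have hT : ρ (HeckeAlg.T k 0) = Tmat3 k z := by
    rw [HeckeAlg.T, HeckeAlg.gen, hρ, FreeAlgebra.lift_ι_apply]; rfl
  have hS : ρ (HeckeAlg.S1 k 0) = SM3 k y := by
    rw [HeckeAlg.S1, HeckeAlg.gen, hρ, FreeAlgebra.lift_ι_apply]; rfl
  refine ⟨ρ, hT, hS, ?_, ?_⟩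
  · intro hsimple hyz
    let w : Fin 3 → k := ![(y : k) ^ 2, y, 1]
    have hgen : ∀ i, ∃ c : k, m3gens k z y i w = c • w := by
      intro i
      fin_cases i
      · refine ⟨y, ?_⟩
        change Tmat3 k z w = _
        rw [Tmat3_apply, ← hyz]
        ext i; fin_cases i <;> simp [w] <;> ring
      · refine ⟨(y : k)⁻¹, ?_⟩
        change Matrix.mulVecLin _ w = _
        rw [m3Tinv_apply, ← hyz]
        ext i; fin_cases i <;> simp [w] <;> field_simp
      · refine ⟨0, ?_⟩
        change SM3 k y w = _
        rw [SM3_apply]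
        ext i; fin_cases i <;> simp [w]
      · refine ⟨0, ?_⟩
        change Matrix.mulVecLin _ w = _
        rw [m3S2_apply]
        ext i; fin_cases i <;> simp [w]; field_simp; simp
    have hall : ∀ a, ∃ c : k, FreeAlgebra.lift k (m3gens k z y) a w = c • w := by
      intro a
      induction a using FreeAlgebra.induction with
      | grade0 r => exact ⟨r, by simp [Module.algebraMap_end_apply]⟩
      | grade1 i => simpa using hgen i
      | mul a b ha hb =>
        obtain ⟨c, hc⟩ := ha
        obtain ⟨d, hd⟩ := hb
        exact ⟨d * c, by rw [map_mul, Module.End.mul_apply, hd, map_smul, hc, smul_smul]⟩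
      | add a b ha hb =>
        obtain ⟨c, hc⟩ := ha
        obtain ⟨d, hd⟩ := hb
        exact ⟨c + d, by rw [map_add, LinearMap.add_apply, hc, hd, add_smul]⟩
    have hinv : ∀ a : Hk k, ∀ x ∈ Submodule.span k {w}, ρ a x ∈ Submodule.span k {w} := by
      intro a x hx
      obtain ⟨b, rfl⟩ := RingQuot.mkAlgHom_surjective k (HeckeRel k 0) a
      obtain ⟨c, rfl⟩ := Submodule.mem_span_singleton.1 hx
      obtain ⟨d, hd⟩ := hall b
      rw [hρ, map_smul, hd, smul_smul]
      exact Submodule.mem_span_singleton.2 ⟨_, rfl⟩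
    rcases hsimple (Submodule.span k {w}) hinv with h | h
    · rw [Submodule.span_singleton_eq_bot] at h
      simpa [w] using congrFun h 2
    · have h0 : (![1, 0, 0] : Fin 3 → k) ∈ Submodule.span k {w} := h ▸ Submodule.mem_top
      obtain ⟨c, hc⟩ := Submodule.mem_span_singleton.1 h0
      have h2 := congrFun hc 2
      have h1 := congrFun hc 0
      simp [w] at h2 h1
      simp [h2] at h1
  · intro hne W hW
    have hTW : ∀ x ∈ W, Tmat3 k z x ∈ W := fun x hx => hT ▸ hW _ x hx
    have hSW : ∀ x ∈ W, SM3 k y x ∈ W := fun x hx => hS ▸ hW _ x hx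
    by_cases hf : ∃ x ∈ W, (y : k)⁻¹ * x 1 - x 2 ≠ 0
    · right
      obtain ⟨x, hx, hc⟩ := hf
      have e2 : (![0, 0, 1] : Fin 3 → k) ∈ W := by
        have := W.smul_mem ((y : k)⁻¹ * x 1 - x 2)⁻¹ (hSW x hx)
        rw [SM3_apply] at this
        convert this using 1
        ext i; fin_cases i <;> simp [inv_mul_cancel₀ hc]
      have e0 : (![1, 0, 0] : Fin 3 → k) ∈ W := by
        have := W.smul_mem (z : k)⁻¹ (hTW _ e2)
        rw [Tmat3_apply] at this
        convert this using 1
        ext i; fin_cases i <;> simp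
      have e1 : (![0, 1, 0] : Fin 3 → k) ∈ W := by
        have := hTW _ e0
        rw [Tmat3_apply] at this
        convert this using 1
        ext i; fin_cases i <;> simp
      rw [eq_top_iff]
      intro u _
      have := W.add_mem (W.add_mem (W.smul_mem (u 0) e0) (W.smul_mem (u 1) e1))
        (W.smul_mem (u 2) e2)
      convert this using 1
      ext i; fin_cases i <;> simp
    · left
      push Not at hf
      rw [eq_bot_iff]
      intro x hx
      have h1 := hf x hx
      have h2 := hf _ (hTW x hx)
      have h3 := hf _ (hTW _ (hTW x hx))
      simp only [Tmat3_apply, Matrix.cons_val] at h2 h3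
      field_simp at h1 h2 h3
      have hx2 : x 2 = 0 := by
        have : ((y : k) ^ 3 - z) * x 2 = 0 := by grind
        exact (mul_eq_zero.1 this).resolve_left (sub_ne_zero.2 hne)
      have hx1 : x 1 = 0 := by grind
      have hx0 : x 0 = 0 := by grind
      rw [Submodule.mem_bot]
      ext i; fin_cases i <;> simp [hx0, hx1, hx2]
end
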